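/- arXiv:2208.15000 — 2 statements merged into one kernel-verified Lean document; each statement's English description precedes it below -/
import Mathlib

section
/- Let A = KQ/I be a special biserial algebra over an algebraically closed field K, b a band for A, λ ∈ K^×, and M = M(b,λ,1) with its standard basis {z_i : 1 ≤ i ≤ n}. For every proper subrepresentation L of M there exists a subrepresentation L̃ of M with dim L̃ = dim L such that at every vertex the space of L̃ is spanned by a subset of the standard basis vectors lying at that vertex; in particular L̃ is a direct sum of string modules and has no composition factor embedding diagonally into M. -/
/-!
The proof is a Gröbner degeneration. Suppose the positions of the band carry a total order such
that every arrow, as a partial injection on positions, preserves and reflects the order. Then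
replacing `L` at each vertex by the span of the basis vectors at the leading positions of its
elements keeps the dimension (`finrank_coordSub_leadSet`), and it gives a subrepresentation: an
arrow that does not kill the leading basis vector of `x` carries it to the leading basis vector
of the image of `x`.

Such an order exists for every reduced primitive cyclic word (`exists_injective_stepMonotone`).
It is built by lexicographic refinement of order-compatible rank functions `r` with ties,
starting from a constant one. The ties define a finite quotient graph `Γ` of the cycle: its
vertices are the values of `r`, its edges the pairs of an arrow and a value of `r` at its source.
If `Γ` has more edges than vertices, a dimension count (`exists_potential`) gives a function on
the edges of `Γ` with signed sum zero around the band, whose potential on the positions separates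
some tied pair; refining by this potential increases the number of values of `r`. Otherwise `Γ`
is a circle: since the word is reduced, every vertex has at least two half-edges, hence exactly
two (`letters_eq_of_card_le`). Then a tie would propagate around the whole word, making it
invariant under a nontrivial rotation, against primitivity, or equal to a rotation of its formal
inverse, which is impossible for a reduced word (`injective_of_letters_eq`).
-/

attribute [local instance] Classical.propDecidable

/-- A finite quiver: finite sets of vertices and arrows with source and target maps. -/
structure FinQuiver where
  V : Type
  A : Type
  [fintypeV : Fintype V]
  [decEqV : DecidableEq V]
  [fintypeA : Fintype A]
  [decEqA : DecidableEq A]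
  s : A → V
  t : A → V

attribute [instance] FinQuiver.fintypeV FinQuiver.decEqV FinQuiver.fintypeA FinQuiver.decEqA

/-- A finite-dimensional representation of a finite quiver over a field `K`. -/
structure QRep (K : Type) [Field K] (Q : FinQuiver) where
  M : Q.V → Type
  [acg : ∀ i, AddCommGroup (M i)]
  [mod : ∀ i, Module K (M i)]
  [fd : ∀ i, FiniteDimensional K (M i)]
  φ : ∀ a : Q.A, M (Q.s a) →ₗ[K] M (Q.t a)

attribute [instance] QRep.acg QRep.mod QRep.fd

/-- A subrepresentation: a subspace at every vertex, compatible with the arrow maps. -/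
structure QSubRep {K : Type} [Field K] {Q : FinQuiver} (R : QRep K Q) where
  L : ∀ i, Submodule K (R.M i)
  compat : ∀ a : Q.A, ∀ x ∈ L (Q.s a), R.φ a x ∈ L (Q.t a)

def QSubRep.le {K : Type} [Field K] {Q : FinQuiver} {R : QRep K Q} (N N' : QSubRep R) : Prop :=
  ∀ i, N.L i ≤ N'.L i

/-- The dimension vector of a representation. -/
noncomputable def QRep.dimVec {K : Type} [Field K] {Q : FinQuiver} (R : QRep K Q) (i : Q.V) : ℕ :=
  Module.finrank K (R.M i)

/-- Standard inner product of a real vector with a dimension vector. -/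
def stabInner {Q : FinQuiver} (v : Q.V → ℝ) (d : Q.V → ℕ) : ℝ :=
  ∑ i, v i * (d i : ℝ)

/-- `v`-semistability of a representation. -/
def IsSemistable {K : Type} [Field K] {Q : FinQuiver} (R : QRep K Q) (v : Q.V → ℝ) : Prop :=
  stabInner v R.dimVec = 0 ∧
    ∀ N : QSubRep R, stabInner v (fun i => Module.finrank K (N.L i)) ≤ 0

/-- The stability space of a representation. -/
def stabSpace {K : Type} [Field K] {Q : FinQuiver} (R : QRep K Q) : Set (Q.V → ℝ) :=
  {v | IsSemistable R v}

/-- `v`-stability of a representation. -/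
def IsStable {K : Type} [Field K] {Q : FinQuiver} (R : QRep K Q) (v : Q.V → ℝ) : Prop :=
  stabInner v R.dimVec = 0 ∧
    ∀ N : QSubRep R, (∃ i, N.L i ≠ ⊥) → (∃ i, N.L i ≠ ⊤) →
      stabInner v (fun i => Module.finrank K (N.L i)) < 0

/-- The thin sincere representation with identity maps: `K` at every vertex. -/
noncomputable def thinRep (K : Type) [Field K] (Q : FinQuiver) : QRep K Q where
  M _ := K
  φ _ := LinearMap.id

/-- The set of all finite non-negative real linear combinations of elements of `X`. -/
def coneSpan {E : Type} [AddCommMonoid E] [Module ℝ E] (X : Set E) : Set E :=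
  {x | ∃ (n : ℕ) (c : Fin n → ℝ) (f : Fin n → E),
    (∀ j, 0 ≤ c j) ∧ (∀ j, f j ∈ X) ∧ x = ∑ j, c j • f j}

/-- The standard basis vector of `ℝ^{Q₀}` at a vertex. -/
noncomputable def eVec (Q : FinQuiver) (i : Q.V) : Q.V → ℝ := Pi.single i 1

/-- A subrepresentation viewed as a representation in its own right. -/
noncomputable def QSubRep.toRep {K : Type} [Field K] {Q : FinQuiver} {R : QRep K Q}
    (N : QSubRep R) : QRep K Q where
  M i := ↥(N.L i)
  φ a := (R.φ a).restrict (fun x hx => N.compat a x hx)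

/-- The quotient of a representation by a subrepresentation. -/
noncomputable def QRep.quotBy {K : Type} [Field K] {Q : FinQuiver} (R : QRep K Q)
    (N : QSubRep R) : QRep K Q where
  M i := R.M i ⧸ N.L i
  φ a := Submodule.mapQ _ _ (R.φ a) (fun x hx => N.compat a x hx)

/-- The quotient `N'/N` of nested subrepresentations, as a representation. -/
noncomputable def quotRep {K : Type} [Field K] {Q : FinQuiver} (R : QRep K Q)
    (N N' : QSubRep R) (h : QSubRep.le N N') : QRep K Q where
  M i := ↥(N'.L i) ⧸ Submodule.comap (N'.L i).subtype (N.L i)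
  φ a := Submodule.mapQ _ _ ((R.φ a).restrict (fun x hx => N'.compat a x hx))
    (by
      intro x hx
      simp only [Submodule.mem_comap, Submodule.subtype_apply,
        LinearMap.restrict_apply] at hx ⊢
      exact N.compat a _ hx)

/-- A representation is nonzero if some vertex space is nonzero. -/
def QRep.Nonzero {K : Type} [Field K] {Q : FinQuiver} (R : QRep K Q) : Prop :=
  ∃ i, Module.finrank K (R.M i) ≠ 0

/-- Indecomposability: nonzero and admitting no internal direct sum decomposition into two
nonzero subrepresentations. -/
def Indecomposable {K : Type} [Field K] {Q : FinQuiver} (R : QRep K Q) : Prop :=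
  R.Nonzero ∧
    ¬∃ U W : QSubRep R, (∃ i, U.L i ≠ ⊥) ∧ (∃ i, W.L i ≠ ⊥) ∧
      (∀ i, U.L i ⊓ W.L i = ⊥) ∧ (∀ i, U.L i ⊔ W.L i = ⊤)

/-- Isomorphism of representations. -/
def RepIso {K : Type} [Field K] {Q : FinQuiver} (R R' : QRep K Q) : Prop :=
  ∃ f : ∀ i, R.M i ≃ₗ[K] R'.M i,
    ∀ (a : Q.A) (x : R.M (Q.s a)), f (Q.t a) (R.φ a x) = R'.φ a (f (Q.s a) x)

/-- The support of a representation. -/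
def QRep.supp {K : Type} [Field K] {Q : FinQuiver} (R : QRep K Q) : Set Q.V :=
  {i | Module.finrank K (R.M i) ≠ 0}

/-- The stability space restricted to the coordinate subspace of the support. -/
def Dsupp {K : Type} [Field K] {Q : FinQuiver} (R : QRep K Q) : Set (Q.V → ℝ) :=
  stabSpace R ∩ {v | ∀ i, i ∉ R.supp → v i = 0}

/-- Standard inner product on `ℝ^V`. -/
def rInner {V : Type} [Fintype V] (a v : V → ℝ) : ℝ := ∑ i, a i * v i

/-- A face of a polyhedral cone. -/
def IsFace {V : Type} [Fintype V] (C F : Set (V → ℝ)) : Prop :=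
  ∃ a : V → ℝ, (∀ v ∈ C, rInner a v ≤ 0) ∧ F = C ∩ {v | rInner a v = 0}

/-- The dimension of the linear span of a subset of `ℝ^V`. -/
noncomputable def coneDim {V : Type} [Fintype V] (F : Set (V → ℝ)) : ℕ :=
  Module.finrank ℝ ↥(Submodule.span ℝ F)

/-- A facet: a face of codimension one. -/
def IsFacet {V : Type} [Fintype V] (C F : Set (V → ℝ)) : Prop :=
  IsFace C F ∧ coneDim F + 1 = coneDim C

/-- Composability of a list of arrows (a directed path). -/
def PathComposable {Q : FinQuiver} : List Q.A → Prop
  | [] => True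
  | [_] => True
  | a :: b :: l => Q.t a = Q.s b ∧ PathComposable (b :: l)

/-- Letters: direct arrows (`inl`) and formal inverses of arrows (`inr`). -/
abbrev Letter (Q : FinQuiver) := Q.A ⊕ Q.A

/-- Source of a letter. -/
def lsrc {Q : FinQuiver} : Letter Q → Q.V
  | Sum.inl a => Q.s a
  | Sum.inr a => Q.t a

/-- Target of a letter. -/
def ltgt {Q : FinQuiver} : Letter Q → Q.V
  | Sum.inl a => Q.t a
  | Sum.inr a => Q.s a

/-- The formal inverse of a letter. -/
def linv {Q : FinQuiver} : Letter Q → Letter Q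
  | Sum.inl a => Sum.inr a
  | Sum.inr a => Sum.inl a

/-- The underlying quiver arrow of a letter. -/
def und {Q : FinQuiver} : Letter Q → Q.A
  | Sum.inl a => a
  | Sum.inr a => a

/-- A letter is direct if it is an arrow (not a formal inverse). -/
def isDir {Q : FinQuiver} (c : Letter Q) : Prop := c.isLeft = true

/-- Composability of a word of letters. -/
def WordComposable {Q : FinQuiver} : List (Letter Q) → Prop
  | [] => True
  | [_] => True
  | c :: d :: l => ltgt c = lsrc d ∧ WordComposable (d :: l)

/-- Reducedness of a word: no letter is followed by its own inverse. -/
def WordReduced {Q : FinQuiver} : List (Letter Q) → Prop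
  | [] => True
  | [_] => True
  | c :: d :: l => d ≠ linv c ∧ WordReduced (d :: l)

/-- A bound quiver: a set of (monomial) relations generating an admissible ideal. -/
structure BoundQuiver (Q : FinQuiver) where
  rel : List Q.A → Prop
  adm_comp : ∀ u, rel u → PathComposable u ∧ 2 ≤ u.length
  adm_bound : ∃ N : ℕ, ∀ u : List Q.A, PathComposable u → N ≤ u.length →
    ∃ u', rel u' ∧ u' <:+: u

/-- The special biserial conditions on a bound quiver algebra. -/
def SpecialBiserial {Q : FinQuiver} (D : BoundQuiver Q) : Prop :=
  (∀ v : Q.V, Set.ncard {a : Q.A | Q.s a = v} ≤ 2) ∧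
  (∀ v : Q.V, Set.ncard {a : Q.A | Q.t a = v} ≤ 2) ∧
  (∀ a c d : Q.A, Q.t a = Q.s c → Q.t a = Q.s d → c ≠ d → D.rel [a, c] ∨ D.rel [a, d]) ∧
  (∀ a b c : Q.A, Q.t a = Q.s c → Q.t b = Q.s c → a ≠ b → D.rel [a, c] ∨ D.rel [b, c])

/-- A string: a nonempty composable reduced word such that no subword of it or of its
inverse lies in the ideal. -/
structure IsString {Q : FinQuiver} (D : BoundQuiver Q) (w : List (Letter Q)) : Prop where
  ne : w ≠ []
  comp : WordComposable w
  red : WordReduced w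
  avoid : ∀ u : List Q.A, u.map Sum.inl <:+: w → ¬D.rel u
  avoid_inv : ∀ u : List Q.A, (u.map Sum.inr).reverse <:+: w → ¬D.rel u

/-- The `k`-fold concatenation of a word with itself. -/
def listPow {α : Type} (u : List α) : ℕ → List α
  | 0 => []
  | n + 1 => u ++ listPow u n

/-- A band: a cyclic word all of whose powers are strings, which is not itself a proper
power of a shorter word. -/
def IsBand {Q : FinQuiver} (D : BoundQuiver Q) (b : List (Letter Q)) : Prop :=
  b ≠ [] ∧ (∀ m : ℕ, 1 ≤ m → IsString D (listPow b m)) ∧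
    ∀ (u : List (Letter Q)) (k : ℕ), 2 ≤ k → b ≠ listPow u k

/-- The `j`-th vertex visited by a (nonempty) walk `w`. -/
def wVtx {Q : FinQuiver} (w : List (Letter Q)) (hw : w ≠ []) (j : ℕ) : Q.V :=
  if j = 0 then lsrc (w.head hw) else ltgt (w.getD (j - 1) (w.head hw))

/-- The basis vector at position `j` is sent to the one at position `k` by the arrow `a`. -/
def stepsTo {Q : FinQuiver} (w : List (Letter Q)) (a : Q.A) (j k : ℕ) : Prop :=
  (k = j + 1 ∧ w[j]? = some (Sum.inl a)) ∨ (j = k + 1 ∧ w[k]? = some (Sum.inr a))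

/-- The string module `M(w)` of a nonempty walk `w`, with one standard basis vector for each
vertex visit, direct letters acting forwards and inverse letters acting backwards. -/
noncomputable def stringRep (K : Type) [Field K] (Q : FinQuiver) (w : List (Letter Q))
    (hw : w ≠ []) : QRep K Q where
  M i := ({j : Fin (w.length + 1) // wVtx w hw j = i} → K)
  φ a := Matrix.mulVecLin
    (fun (p : {j : Fin (w.length + 1) // wVtx w hw (j : ℕ) = Q.t a})
         (q : {j : Fin (w.length + 1) // wVtx w hw (j : ℕ) = Q.s a}) =>
      if stepsTo w a (q.1 : ℕ) (p.1 : ℕ) then (1 : K) else 0)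

/-- The vertex `v_j` traversed by a cyclic word (indices mod the length). -/
def bVtx {Q : FinQuiver} (b : List (Letter Q)) (hb : b ≠ []) (j : ℕ) : Q.V :=
  lsrc (b.getD (j % b.length) (b.head hb))

/-- The `j`-th letter of a cyclic word (indices mod the length). -/
def bLett {Q : FinQuiver} (b : List (Letter Q)) (hb : b ≠ []) (j : ℕ) : Letter Q :=
  b.getD (j % b.length) (b.head hb)

/-- Entry of the Jordan block of size `m` with eigenvalue `lam`. -/
noncomputable def jordEntry {K : Type} [Field K] (lam : K) {m : ℕ} (κ μ : Fin m) : K :=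
  if κ = μ then lam else if (μ : ℕ) + 1 = (κ : ℕ) then 1 else 0

/-- The matrix entry of the action of the arrow `a` on a band module, from the basis vector
`z_j^μ` to the basis vector `z_k^κ`: all letters act by identity matrices except the last
one, which acts by the Jordan block with eigenvalue `lam`. -/
noncomputable def bandEntry {Q : FinQuiver} (K : Type) [Field K] (b : List (Letter Q))
    (hb : b ≠ []) (lam : K) {m : ℕ} (a : Q.A) (k j : ℕ) (κ μ : Fin m) : K :=
  (if bLett b hb j = Sum.inl a ∧ (j + 1) % b.length = k % b.length then
    (if j % b.length + 1 = b.length then jordEntry lam κ μ else if κ = μ then 1 else 0)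
   else 0)
  + (if bLett b hb k = Sum.inr a ∧ (k + 1) % b.length = j % b.length then
    (if k % b.length + 1 = b.length then jordEntry lam κ μ else if κ = μ then 1 else 0)
   else 0)

/-- The band module `M(b, lam, m)`. -/
noncomputable def bandRep (K : Type) [Field K] (Q : FinQuiver) (b : List (Letter Q))
    (hb : b ≠ []) (lam : K) (m : ℕ) : QRep K Q where
  M i := (({j : Fin b.length // bVtx b hb j = i} × Fin m) → K)
  φ a := Matrix.mulVecLin
    (fun (p : {j : Fin b.length // bVtx b hb (j : ℕ) = Q.t a} × Fin m)
         (q : {j : Fin b.length // bVtx b hb (j : ℕ) = Q.s a} × Fin m) =>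
      bandEntry K b hb lam a (p.1.1 : ℕ) (q.1.1 : ℕ) p.2 q.2)

/-- The quiver `Q_w` having the same shape as the walk `w`. -/
@[reducible] def stringQuiver (Q : FinQuiver) (w : List (Letter Q)) : FinQuiver where
  V := Fin (w.length + 1)
  A := Fin w.length
  s j := match w.get j with
    | Sum.inl _ => j.castSucc
    | Sum.inr _ => j.succ
  t j := match w.get j with
    | Sum.inl _ => j.succ
    | Sum.inr _ => j.castSucc

/-- Cyclic successor in `Fin n`. -/
def cycSucc {n : ℕ} (j : Fin n) : Fin n := ⟨((j : ℕ) + 1) % n, Nat.mod_lt _ j.pos⟩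

/-- The cyclic quiver `Q_b` having the same shape as the cyclic word `b`. -/
@[reducible] def bandQuiver (Q : FinQuiver) (b : List (Letter Q)) : FinQuiver where
  V := Fin b.length
  A := Fin b.length
  s j := match b.get j with
    | Sum.inl _ => j
    | Sum.inr _ => cycSucc j
  t j := match b.get j with
    | Sum.inl _ => cycSucc j
    | Sum.inr _ => j

/-- A ray vector of a cone. -/
def IsRay {E : Type} [AddCommMonoid E] [Module ℝ E] (C : Set E) (u : E) : Prop :=
  u ∈ C ∧ u ≠ 0 ∧ ∀ x ∈ C, ∀ y ∈ C, u = x + y →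
    (∃ c : ℝ, 0 ≤ c ∧ x = c • u) ∧ ∃ c : ℝ, 0 ≤ c ∧ y = c • u

/-- A minimal admissible sum: a nonzero non-negative combination of elements of `S` lying in
the subspace `Rsub`, such that no nonzero non-negative combination supported on a proper
subset of its support lies in `Rsub`. -/
def IsMinAdmissibleSum {E : Type} [AddCommGroup E] [Module ℝ E] (Rsub : Set E)
    (S : Finset E) (x : E) : Prop :=
  ∃ lam : E → ℝ, (∀ s ∈ S, 0 ≤ lam s) ∧ x = ∑ s ∈ S, lam s • s ∧ x ∈ Rsub ∧ x ≠ 0 ∧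
    ¬∃ mu : E → ℝ, (∀ s ∈ S, 0 ≤ mu s) ∧
      {s ∈ S | mu s ≠ 0} ⊂ {s ∈ S | lam s ≠ 0} ∧
      (∑ s ∈ S, mu s • s) ∈ Rsub ∧ (∑ s ∈ S, mu s • s) ≠ 0

/-- The preorder induced by a walk `u` on the vertices: generated by `t(α) ≤ s(α)` over the
underlying arrows `α` of the letters of `u`. -/
def wordRel {Q : FinQuiver} (u : List (Letter Q)) : Q.V → Q.V → Prop :=
  Relation.ReflTransGen (fun x y => ∃ c ∈ u, Q.t (und c) = x ∧ Q.s (und c) = y)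

/-- `v` is obtained from the cyclic word `b` by deleting one letter. -/
def DeleteOne {Q : FinQuiver} (b v : List (Letter Q)) : Prop :=
  ∃ (l₁ l₂ : List (Letter Q)) (c : Letter Q), b = l₁ ++ c :: l₂ ∧ v = l₂ ++ l₁

/-- The generating vector of the stability space of a thin band module attached to the
`i`-th letter: `e_{v_i} - e_{v_{i+1}}` for a direct letter and its negative otherwise. -/
noncomputable def sVec {Q : FinQuiver} (b : List (Letter Q)) (hb : b ≠ []) (i : ℕ) :
    Q.V → ℝ :=
  if isDir (bLett b hb i) then
    Pi.single (bVtx b hb i) 1 - Pi.single (bVtx b hb (i + 1)) 1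
  else Pi.single (bVtx b hb (i + 1)) 1 - Pi.single (bVtx b hb i) 1

/-- The set `S = {s_1, …, s_n}` of generating vectors. -/
def Sset {Q : FinQuiver} (b : List (Letter Q)) (hb : b ≠ []) : Set (Q.V → ℝ) :=
  {u | ∃ i < b.length, u = sVec b hb i}

/-- The `g`-vector of the thin band module: the sum of the `s_i` over direct letters. -/
noncomputable def gVec {Q : FinQuiver} (b : List (Letter Q)) (hb : b ≠ []) : Q.V → ℝ :=
  ∑ i ∈ Finset.range b.length, if isDir (bLett b hb i) then sVec b hb i else 0

/-- The coefficient `ε_i` (for the mathematical index `i`, with letters `α_{i-1}`, `α_i`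
at 0-based positions `i-2`, `i-1`). -/
noncomputable def epsCoef {Q : FinQuiver} (b : List (Letter Q)) (hb : b ≠ []) (i : ℕ) : ℝ :=
  if ¬isDir (bLett b hb (i - 2)) ∧ isDir (bLett b hb (i - 1)) then 1
  else if isDir (bLett b hb (i - 2)) ∧ ¬isDir (bLett b hb (i - 1)) then -1
  else 0

/-- The vector `g_w` for `w = α_1 ⋯ α_m` (the `g`-vector of `M(w)`). -/
noncomputable def gwVec {Q : FinQuiver} (b : List (Letter Q)) (hb : b ≠ []) (m : ℕ) :
    Q.V → ℝ :=
  (if isDir (bLett b hb 0) then Pi.single (bVtx b hb 0) (1 : ℝ) else 0)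
  + (if 1 ≤ m ∧ ¬isDir (bLett b hb (m - 1)) then Pi.single (bVtx b hb m) (1 : ℝ) else 0)
  + (if 1 ≤ m ∧ isDir (bLett b hb m) then -Pi.single (bVtx b hb (m + 1)) (1 : ℝ) else 0)
  + (if isDir (bLett b hb (b.length - 1)) then -Pi.single (bVtx b hb (b.length - 1)) (1 : ℝ)
     else 0)
  + ∑ i ∈ Finset.Icc 2 m, epsCoef b hb i • (Pi.single (bVtx b hb (i - 1)) (1 : ℝ) : Q.V → ℝ)

/-- The vector `g_w'` for `w = α_1 ⋯ α_m` (equal to `-g^{M(w)ᵒᵖ}`). -/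
noncomputable def gwVec' {Q : FinQuiver} (b : List (Letter Q)) (hb : b ≠ []) (m : ℕ) :
    Q.V → ℝ :=
  (if ¬isDir (bLett b hb 0) then -Pi.single (bVtx b hb 0) (1 : ℝ) else 0)
  + (if 1 ≤ m ∧ isDir (bLett b hb (m - 1)) then -Pi.single (bVtx b hb m) (1 : ℝ) else 0)
  + (if 1 ≤ m ∧ ¬isDir (bLett b hb m) then Pi.single (bVtx b hb (m + 1)) (1 : ℝ) else 0)
  + (if ¬isDir (bLett b hb (b.length - 1)) then Pi.single (bVtx b hb (b.length - 1)) (1 : ℝ)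
     else 0)
  + ∑ i ∈ Finset.Icc 2 m, epsCoef b hb i • (Pi.single (bVtx b hb (i - 1)) (1 : ℝ) : Q.V → ℝ)

/-! ### Orders on the positions of a cyclic word -/

/-- The arrow `a` moves position `i` to position `i'` along the cyclic word `c`, whose cyclic
successor is `σ`: either forwards along a direct letter or backwards along an inverse one. -/
def CycStep {Q : FinQuiver} {P : Type} (σ : Equiv.Perm P) (c : P → Letter Q) (a : Q.A)
    (i i' : P) : Prop :=
  (i' = σ i ∧ c i = Sum.inl a) ∨ (i = σ i' ∧ c i' = Sum.inr a)

/-- A rank function on positions, possibly with ties, for which every arrow preserves and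
reflects strict comparison. -/
def StepMonotone {Q : FinQuiver} {P α : Type} [LinearOrder α] (σ : Equiv.Perm P)
    (c : P → Letter Q) (r : P → α) : Prop :=
  ∀ a i i' j j', CycStep σ c a i i' → CycStep σ c a j j' → (r i < r j ↔ r i' < r j')

/-- The position from which the arrow underlying the letter `c e` starts. -/
def cycSrc {Q : FinQuiver} {P : Type} (σ : Equiv.Perm P) (c : P → Letter Q) (e : P) : P :=
  if (c e).isLeft then e else σ e

/-- The position at which the arrow underlying the letter `c e` ends. -/
def cycTgt {Q : FinQuiver} {P : Type} (σ : Equiv.Perm P) (c : P → Letter Q) (e : P) : P :=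
  if (c e).isLeft then σ e else e

theorem linv_linv {Q : FinQuiver} (x : Letter Q) : linv (linv x) = x := by
  cases x <;> rfl

theorem linv_ne_self {Q : FinQuiver} (x : Letter Q) : linv x ≠ x := by
  cases x <;> simp [linv]

theorem cycStep_iff {Q : FinQuiver} {P : Type} {σ : Equiv.Perm P} {c : P → Letter Q} {a : Q.A}
    {i i' : P} :
    CycStep σ c a i i' ↔ ∃ e, und (c e) = a ∧ cycSrc σ c e = i ∧ cycTgt σ c e = i' := by
  constructor
  · rintro (⟨h, h'⟩ | ⟨h, h'⟩)
    · exact ⟨i, by simp [h', und, cycSrc, cycTgt, h]⟩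
    · exact ⟨i', by simp [h', und, cycSrc, cycTgt, h]⟩
  · rintro ⟨e, rfl, rfl, rfl⟩
    rcases h : c e with a | a
    · left; simp [h, und, cycSrc, cycTgt]
    · right; simp [h, und, cycSrc, cycTgt]

theorem cycStep_self {Q : FinQuiver} {P : Type} (σ : Equiv.Perm P) (c : P → Letter Q) (e : P) :
    CycStep σ c (und (c e)) (cycSrc σ c e) (cycTgt σ c e) :=
  cycStep_iff.2 ⟨e, rfl, rfl, rfl⟩

theorem StepMonotone.eq_iff {Q : FinQuiver} {P α : Type} [LinearOrder α] {σ : Equiv.Perm P}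
    {c : P → Letter Q} {r : P → α} (hr : StepMonotone σ c r) {a : Q.A} {i i' j j' : P}
    (h : CycStep σ c a i i') (h' : CycStep σ c a j j') : r i = r j ↔ r i' = r j' := by
  have h1 := hr a i i' j j' h h'
  have h2 := hr a j j' i i' h' h
  constructor
  · intro e
    exact le_antisymm (not_lt.1 fun x => (h2.2 x).ne e.symm) (not_lt.1 fun x => (h1.2 x).ne e)
  · intro e
    exact le_antisymm (not_lt.1 fun x => (h2.1 x).ne e.symm) (not_lt.1 fun x => (h1.1 x).ne e)

theorem StepMonotone.next_eq {Q : FinQuiver} {P α : Type} [LinearOrder α] {σ : Equiv.Perm P}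
    {c : P → Letter Q} {r : P → α} (hr : StepMonotone σ c r) {i j : P}
    (h : r i = r j) (hc : c i = c j) : r (σ i) = r (σ j) := by
  rcases h' : c i with a | a
  · exact (hr.eq_iff (a := a) (Or.inl ⟨rfl, h'⟩) (Or.inl ⟨rfl, hc ▸ h'⟩)).1 h
  · exact (hr.eq_iff (a := a) (Or.inr ⟨rfl, h'⟩) (Or.inr ⟨rfl, hc ▸ h'⟩)).2 h

theorem StepMonotone.next_eq_prev {Q : FinQuiver} {P α : Type} [LinearOrder α]
    {σ : Equiv.Perm P} {c : P → Letter Q} {r : P → α} (hr : StepMonotone σ c r) {i j : P}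
    (h : r i = r (σ j)) (hc : c i = linv (c j)) : r (σ i) = r j := by
  rcases h' : c j with a | a
  · rw [h'] at hc
    exact (hr.eq_iff (a := a) (Or.inr ⟨rfl, hc⟩) (Or.inl ⟨rfl, h'⟩)).2 h
  · rw [h'] at hc
    exact (hr.eq_iff (a := a) (Or.inl ⟨rfl, hc⟩) (Or.inr ⟨rfl, h'⟩)).1 h

/-- The quotient graph of `r` has the values of `r` as vertices and the pairs
`(und (c e), r (cycSrc σ c e))` as edges. If it has more edges than vertices, then there is a grading of the positions,
with increments depending only on edges of the quotient graph, which is not constant on some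
fibre of `r`. The solution space of the defining equations of such gradings has dimension at
least the number of edges, whereas gradings constant on the fibres of `r` only account for
the number of vertices. -/
theorem exists_potential {Q : FinQuiver} {P α : Type} [Fintype P] [LinearOrder α]
    {σ : Equiv.Perm P} {c : P → Letter Q} {r : P → α}
    (hcard : (Finset.univ.image r).card <
      (Finset.univ.image fun e => (und (c e), r (cycSrc σ c e))).card) :
    ∃ p : P → ℚ, (∀ e e', (und (c e), r (cycSrc σ c e)) = (und (c e'), r (cycSrc σ c e')) →
        p (cycTgt σ c e) - p (cycSrc σ c e) = p (cycTgt σ c e') - p (cycSrc σ c e')) ∧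
      ∃ i j, r i = r j ∧ p i ≠ p j := by
  set κ : P → Q.A × α := fun e => (und (c e), r (cycSrc σ c e)) with hκ
  let E := {x // x ∈ Finset.univ.image κ}
  let V := {x // x ∈ Finset.univ.image r}
  have : Fintype E := Finset.fintypeCoeSort _
  have : Fintype V := Finset.fintypeCoeSort _
  let κ' : P → E := fun e => ⟨κ e, Finset.mem_image_of_mem _ (Finset.mem_univ _)⟩
  by_contra! hcon
  let F : ((P → ℚ) × (E → ℚ)) →ₗ[ℚ] (P → ℚ) :=
    { toFun := fun x e => x.1 (cycTgt σ c e) - x.1 (cycSrc σ c e) - x.2 (κ' e)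
      map_add' := by intro x y; ext e; simp; ring
      map_smul' := by intro t x; ext e; simp; ring }
  have hsec : ∀ v : V, ∃ i, r i = v := fun v => by
    obtain ⟨i, -, hi⟩ := Finset.mem_image.1 v.2
    exact ⟨i, hi⟩
  choose sec hsec using hsec
  let G : LinearMap.ker F →ₗ[ℚ] (V → ℚ) :=
    { toFun := fun x v => x.1.1 (sec v)
      map_add' := by intro x y; ext e; simp
      map_smul' := by intro t x; ext e; simp }
  have hG : Function.Injective G := by
    rw [injective_iff_map_eq_zero]
    rintro ⟨⟨p, φ⟩, hx⟩ h0
    have hF : ∀ e, p (cycTgt σ c e) - p (cycSrc σ c e) - φ (κ' e) = 0 := fun e => congrFun hx e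
    have hp : ∀ i, p i = 0 := by
      intro i
      let v : V := ⟨r i, Finset.mem_image_of_mem _ (Finset.mem_univ _)⟩
      have h1 : p (sec v) = 0 := congrFun h0 v
      rw [← h1]
      refine hcon p ?_ i (sec v) (hsec v).symm
      intro e e' h
      have h2 : κ' e = κ' e' := Subtype.ext h
      have := hF e
      have := hF e'
      rw [h2] at *
      linarith
    have hφ : ∀ x, φ x = 0 := by
      rintro ⟨x, hx'⟩
      obtain ⟨e, -, rfl⟩ := Finset.mem_image.1 hx'
      have := hF e
      rw [hp, hp] at this
      change φ (κ' e) = 0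
      linarith
    ext x
    · exact hp x
    · exact hφ x
  have h1 := LinearMap.finrank_le_finrank_of_injective hG
  have h2 := LinearMap.finrank_range_add_finrank_ker F
  have h3 : Module.finrank ℚ (LinearMap.range F) ≤ Fintype.card P := by
    simpa using Submodule.finrank_le (LinearMap.range F)
  have h4 : Module.finrank ℚ (V → ℚ) = (Finset.univ.image r).card := by
    rw [Module.finrank_fintype_fun_eq_card]
    exact Fintype.card_of_subtype _ fun _ => Iff.rfl
  have h5 : Module.finrank ℚ ((P → ℚ) × (E → ℚ)) =
      Fintype.card P + (Finset.univ.image κ).card := by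
    rw [Module.finrank_prod, Module.finrank_fintype_fun_eq_card,
      Module.finrank_fintype_fun_eq_card]
    congr 1
    exact Fintype.card_of_subtype _ fun _ => Iff.rfl
  omega

theorem card_image_le_of_factors {P β γ : Type} [Fintype P] [DecidableEq β] [DecidableEq γ]
    (f : P → β) (g : P → γ) (h : ∀ x y, f x = f y → g x = g y) :
    (Finset.univ.image g).card ≤ (Finset.univ.image f).card := by
  rcases isEmpty_or_nonempty P with hP | hP
  · simp
  · have : g = (fun y => g (Function.invFun f y)) ∘ f := by
      funext x
      exact h _ _ (Function.invFun_eq ⟨x, rfl⟩).symm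
    rw [this, ← Finset.image_image]
    exact Finset.card_image_le

/-- If the quotient graph of `r` has no more edges than vertices, then each of its vertices has
exactly two half-edges: it has at least two because the word is reduced, and the number of
half-edges is twice the number of edges. Hence tied positions see the same pair of letters. -/
theorem letters_eq_of_card_le {Q : FinQuiver} {P α : Type} [Fintype P] [LinearOrder α]
    {σ : Equiv.Perm P} {c : P → Letter Q} {r : P → α} (hr : StepMonotone σ c r)
    (hred : ∀ i, c (σ i) ≠ linv (c i))
    (hcard : (Finset.univ.image fun e => (und (c e), r (cycSrc σ c e))).card ≤
      (Finset.univ.image r).card) (i j : P) (hij : r i = r j) :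
    ({c i, linv (c (σ⁻¹ i))} : Finset (Letter Q)) = {c j, linv (c (σ⁻¹ j))} := by
  let κ : P → Q.A × α := fun e => (und (c e), r (cycSrc σ c e))
  let O : Finset (Letter Q × α) :=
    Finset.univ.image fun e => (Sum.inl (und (c e)), r (cycSrc σ c e))
  let I : Finset (Letter Q × α) :=
    Finset.univ.image fun e => (Sum.inr (und (c e)), r (cycTgt σ c e))
  let H := O ∪ I
  have hO : O.card ≤ (Finset.univ.image κ).card := by
    apply card_image_le_of_factors
    intro x y h
    simp only [κ, Prod.mk.injEq] at h ⊢
    exact ⟨by rw [h.1], h.2⟩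
  have hI : I.card ≤ (Finset.univ.image κ).card := by
    apply card_image_le_of_factors
    intro x y h
    simp only [κ, Prod.mk.injEq] at h ⊢
    refine ⟨by rw [h.1], (hr.eq_iff (cycStep_self σ c x) ?_).1 h.2⟩
    rw [h.1]
    exact cycStep_self σ c y
  have hH : H.card ≤ 2 * (Finset.univ.image r).card := by
    have := Finset.card_union_le O I
    have : (Finset.univ.image κ).card ≤ (Finset.univ.image r).card := hcard
    change (O ∪ I).card ≤ _
    omega
  have memR : ∀ k, (c k, r k) ∈ H := by
    intro k
    rcases h : c k with a | a
    · exact Finset.mem_union_left _ (Finset.mem_image.2 ⟨k, by simp [h, und, cycSrc]⟩)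
    · exact Finset.mem_union_right _ (Finset.mem_image.2 ⟨k, by simp [h, und, cycTgt]⟩)
  have memL : ∀ k, (linv (c (σ⁻¹ k)), r k) ∈ H := by
    intro k
    rcases h : c (σ⁻¹ k) with a | a
    · exact Finset.mem_union_right _
        (Finset.mem_image.2 ⟨σ⁻¹ k, Finset.mem_univ _, by rw [cycTgt, h]; simp [und, linv]⟩)
    · exact Finset.mem_union_left _
        (Finset.mem_image.2 ⟨σ⁻¹ k, Finset.mem_univ _, by rw [cycSrc, h]; simp [und, linv]⟩)
  let fib : α → Finset (Letter Q) := fun x => (H.filter fun y => y.2 = x).image Prod.fst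
  have hfib : ∀ x, (fib x).card = (H.filter fun y => y.2 = x).card := by
    intro x
    apply Finset.card_image_of_injOn
    rintro ⟨l, y⟩ h ⟨l', y'⟩ h' (e : l = l')
    simp only [Finset.coe_filter, Set.mem_ofPred_eq] at h h'
    rw [e, h.2, h'.2]
  have hpair : ∀ k, ({c k, linv (c (σ⁻¹ k))} : Finset (Letter Q)).card = 2 := by
    intro k
    apply Finset.card_pair
    simpa using hred (σ⁻¹ k)
  have hsub : ∀ k, ({c k, linv (c (σ⁻¹ k))} : Finset (Letter Q)) ⊆ fib (r k) := by
    intro k l hl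
    rcases Finset.mem_insert.1 hl with rfl | hl
    · exact Finset.mem_image.2 ⟨_, Finset.mem_filter.2 ⟨memR k, rfl⟩, rfl⟩
    · rw [Finset.mem_singleton.1 hl]
      exact Finset.mem_image.2 ⟨_, Finset.mem_filter.2 ⟨memL k, rfl⟩, rfl⟩
  have hge : ∀ x ∈ Finset.univ.image r, 2 ≤ (fib x).card := by
    intro x hx
    obtain ⟨k, -, rfl⟩ := Finset.mem_image.1 hx
    rw [← hpair k]
    exact Finset.card_le_card (hsub k)
  have hmaps : ∀ y ∈ H, y.2 ∈ Finset.univ.image r := by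
    intro y hy
    rcases Finset.mem_union.1 hy with hy | hy <;>
    · obtain ⟨k, -, rfl⟩ := Finset.mem_image.1 hy
      exact Finset.mem_image_of_mem _ (Finset.mem_univ _)
  have hsum : ∑ x ∈ Finset.univ.image r, (fib x).card = H.card := by
    rw [Finset.card_eq_sum_card_fiberwise hmaps]
    exact Finset.sum_congr rfl fun x _ => hfib x
  have heq : ∀ x ∈ Finset.univ.image r, 2 = (fib x).card := by
    apply (Finset.sum_eq_sum_iff_of_le hge).1
    apply le_antisymm (Finset.sum_le_sum hge)
    rw [hsum, Finset.sum_const, smul_eq_mul]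
    omega
  have hfin : ∀ k, ({c k, linv (c (σ⁻¹ k))} : Finset (Letter Q)) = fib (r k) := by
    intro k
    apply Finset.eq_of_subset_of_card_le (hsub k)
    rw [hpair k, ← heq _ (Finset.mem_image_of_mem _ (Finset.mem_univ k))]
  rw [hfin i, hfin j, hij]

theorem fst_eq_of_pair_eq {β : Type} [DecidableEq β] {x y x' y' : β} (hx : x' ≠ y')
    (h : ({x, y} : Finset β) = {x', y'}) (e : y = y') : x = x' := by
  subst e
  have : x' ∈ ({x, y} : Finset β) := by rw [h]; simp
  simp only [Finset.mem_insert, Finset.mem_singleton] at this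
  rcases this with h | h
  · exact h.symm
  · exact absurd h hx

/-- When tied positions see the same pair of letters (the quotient graph is a circle), a reduced
primitive cyclic word has no ties: two tied positions would make the word either periodic or
equal to a rotation of its inverse. -/
theorem injective_of_letters_eq {Q : FinQuiver} {P α : Type} [LinearOrder α]
    {σ : Equiv.Perm P} {c : P → Letter Q} {r : P → α} (hr : StepMonotone σ c r)
    (htrans : ∀ i j, ∃ k : ℕ, (σ ^ k) i = j)
    (hred : ∀ i, c (σ i) ≠ linv (c i))
    (hprim : ∀ m : ℕ, (∀ i, c ((σ ^ m) i) = c i) → σ ^ m = 1)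
    (hpair : ∀ i j, r i = r j →
      ({c i, linv (c (σ⁻¹ i))} : Finset (Letter Q)) = {c j, linv (c (σ⁻¹ j))}) :
    Function.Injective r := by
  intro i j hij
  have hne : ∀ k, c k ≠ linv (c (σ⁻¹ k)) := fun k => by simpa using hred (σ⁻¹ k)
  obtain ⟨m, rfl⟩ := htrans i j
  have hmem : c i ∈ ({c ((σ ^ m) i), linv (c (σ⁻¹ ((σ ^ m) i)))} : Finset (Letter Q)) := by
    rw [← hpair _ _ hij]; simp
  rcases Finset.mem_insert.1 hmem with hc | hc
  · have key : ∀ k : ℕ, r ((σ ^ k) i) = r ((σ ^ k) ((σ ^ m) i)) ∧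
        c ((σ ^ k) i) = c ((σ ^ k) ((σ ^ m) i)) := by
      intro k
      induction k with
      | zero => exact ⟨hij, hc⟩
      | succ k ih =>
        simp only [pow_succ', Equiv.Perm.mul_apply]
        have h1 := hr.next_eq ih.1 ih.2
        refine ⟨h1, fst_eq_of_pair_eq (hne _) (hpair _ _ h1) ?_⟩
        simp [ih.2]
    have : σ ^ m = 1 := by
      apply hprim
      intro x
      obtain ⟨k, rfl⟩ := htrans i x
      rw [← Equiv.Perm.mul_apply, (Commute.refl σ).pow_pow m k |>.eq, Equiv.Perm.mul_apply]
      exact (key k).2.symm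
    rw [this]; rfl
  · exfalso
    rw [Finset.mem_singleton] at hc
    have key : ∀ k : ℕ, r ((σ ^ k) i) = r ((σ⁻¹ ^ k) ((σ ^ m) i)) ∧
        c ((σ ^ k) i) = linv (c ((σ⁻¹ ^ (k + 1)) ((σ ^ m) i))) := by
      intro k
      induction k with
      | zero => exact ⟨hij, by simpa using hc⟩
      | succ k ih =>
        have h1 : r ((σ ^ (k + 1)) i) = r ((σ⁻¹ ^ (k + 1)) ((σ ^ m) i)) := by
          have := hr.next_eq_prev (i := (σ ^ k) i) (j := (σ⁻¹ ^ (k + 1)) ((σ ^ m) i))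
            (by rw [ih.1, pow_succ' σ⁻¹ k]; simp) ih.2
          rw [← this, pow_succ' σ k, Equiv.Perm.mul_apply]
        refine ⟨h1, ?_⟩
        have h2 := hpair _ _ h1
        rw [Finset.pair_comm (c ((σ⁻¹ ^ (k + 1)) ((σ ^ m) i)))] at h2
        rw [pow_succ' σ⁻¹ (k + 1), Equiv.Perm.mul_apply]
        refine fst_eq_of_pair_eq (hne _).symm h2 ?_
        rw [pow_succ' σ k, Equiv.Perm.mul_apply, ← Equiv.Perm.mul_apply σ⁻¹ σ, inv_mul_cancel, Equiv.Perm.one_apply,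
          ih.2, linv_linv]
    have hpow : ∀ k l : ℕ, (σ⁻¹ ^ k) ((σ ^ (k + l)) i) = (σ ^ l) i := by
      intro k l
      rw [pow_add, Equiv.Perm.mul_apply, inv_pow, ← Equiv.Perm.mul_apply (σ ^ k)⁻¹,
        inv_mul_cancel, Equiv.Perm.one_apply]
    -- The reflection identifying the word with its inverse fixes a letter or swaps two
    -- consecutive ones, depending on the parity of `m`.
    obtain ⟨q, rfl | rfl⟩ : ∃ q, m = 2 * q + 1 ∨ m = 2 * q := by
      obtain ⟨q, h | h⟩ := m.even_or_odd'
      · exact ⟨q, Or.inr h⟩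
      · exact ⟨q, Or.inl h⟩
    · have := (key q).2
      rw [show 2 * q + 1 = (q + 1) + q by ring, hpow] at this
      exact linv_ne_self _ this.symm
    · rcases q with _ | q
      · exact hne i (by simpa using hc)
      · have := (key q).2
        rw [show 2 * (q + 1) = (q + 1) + (q + 1) by ring, hpow, pow_succ' σ q,
          Equiv.Perm.mul_apply] at this
        apply hred ((σ ^ q) i)
        rw [this, linv_linv]

/-- A step-monotone rank function with a tie can be refined to one with more values. -/
theorem exists_refinement {Q : FinQuiver} {P α : Type} [Fintype P] [LinearOrder α]
    {σ : Equiv.Perm P} {c : P → Letter Q} {r : P → α} (hr : StepMonotone σ c r)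
    (htrans : ∀ i j, ∃ k : ℕ, (σ ^ k) i = j)
    (hred : ∀ i, c (σ i) ≠ linv (c i))
    (hprim : ∀ m : ℕ, (∀ i, c ((σ ^ m) i) = c i) → σ ^ m = 1)
    (hinj : ¬Function.Injective r) :
    ∃ r' : P → α ×ₗ ℚ, StepMonotone σ c r' ∧
      (Finset.univ.image r).card < (Finset.univ.image r').card := by
  have hcard : (Finset.univ.image r).card <
      (Finset.univ.image fun e => (und (c e), r (cycSrc σ c e))).card := by
    by_contra! h
    exact hinj (injective_of_letters_eq hr htrans hred hprim
      (letters_eq_of_card_le hr hred h))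
  obtain ⟨p, hp, i, j, hij, hpij⟩ := exists_potential hcard
  refine ⟨fun k => toLex (r k, p k), ?_, ?_⟩
  · intro a x x' y y' hx hy
    have h1 := hr a x x' y y' hx hy
    have h2 := hr.eq_iff hx hy
    have h3 : r x = r y → (p x < p y ↔ p x' < p y') := by
      intro h
      obtain ⟨e, rfl, rfl, rfl⟩ := cycStep_iff.1 hx
      obtain ⟨e', he, rfl, rfl⟩ := cycStep_iff.1 hy
      have := hp e e' (by rw [he, h])
      constructor <;> intro <;> linarith
    simp only [Prod.Lex.toLex_lt_toLex, h1, ← h2]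
    constructor
    · rintro (h | h)
      · exact Or.inl h
      · exact Or.inr ⟨h.1, (h3 h.1).1 h.2⟩
    · rintro (h | h)
      · exact Or.inl h
      · exact Or.inr ⟨h.1, (h3 h.1).2 h.2⟩
  · by_contra! hle
    have himg : Finset.univ.image r =
        (Finset.univ.image fun k => toLex (r k, p k)).image fun y => (ofLex y).1 := by
      rw [Finset.image_image]; rfl
    have hio := Finset.card_image_iff.1
      (le_antisymm Finset.card_image_le (himg ▸ hle))
    have := @hio (toLex (r i, p i)) (Finset.mem_coe.2 (Finset.mem_image_of_mem _ (Finset.mem_univ i)))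
      (toLex (r j, p j)) (Finset.mem_coe.2 (Finset.mem_image_of_mem _ (Finset.mem_univ j))) hij
    simp only [EmbeddingLike.apply_eq_iff_eq, Prod.mk.injEq] at this
    exact hpij this.2

/-- The positions of a reduced primitive cyclic word carry a total order preserved by every
arrow. -/
theorem exists_injective_stepMonotone {Q : FinQuiver} {P : Type} [Fintype P]
    {σ : Equiv.Perm P} {c : P → Letter Q}
    (htrans : ∀ i j, ∃ k : ℕ, (σ ^ k) i = j)
    (hred : ∀ i, c (σ i) ≠ linv (c i))
    (hprim : ∀ m : ℕ, (∀ i, c ((σ ^ m) i) = c i) → σ ^ m = 1) :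
    ∃ (α : Type) (_ : LinearOrder α) (r : P → α),
      StepMonotone σ c r ∧ Function.Injective r := by
  have main : ∀ (N : ℕ) (α : Type) (_ : LinearOrder α) (r : P → α), StepMonotone σ c r →
      Fintype.card P - (Finset.univ.image r).card ≤ N →
      ∃ (α : Type) (_ : LinearOrder α) (r : P → α),
        StepMonotone σ c r ∧ Function.Injective r := by
    intro N
    induction N with
    | zero =>
      intro α _ r hr hN
      refine ⟨α, _, r, hr, ?_⟩
      have h1 : (Finset.univ.image r).card ≤ Fintype.card P := Finset.card_image_le
      have h2 : (Finset.univ.image r).card = (Finset.univ : Finset P).card := by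
        rw [Finset.card_univ]; omega
      simpa using Finset.card_image_iff.1 h2
    | succ N ih =>
      intro α _ r hr hN
      by_cases hinj : Function.Injective r
      · exact ⟨α, _, r, hr, hinj⟩
      · obtain ⟨r', hr', hlt⟩ := exists_refinement hr htrans hred hprim hinj
        have h1 : (Finset.univ.image r').card ≤ Fintype.card P := Finset.card_image_le
        refine ih _ _ r' hr' ?_
        convert (show Fintype.card P - (Finset.univ.image r').card ≤ N by omega)
  exact main _ Unit inferInstance (fun _ => ()) (fun _ _ _ _ _ _ _ => Iff.rfl) le_rfl

/-! ### Leading terms of a subspace -/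

/-- The set of indices at which some vector of `W` has its leading term with respect to the
rank `r`. -/
def leadSet {K ι α : Type} [Field K] [LinearOrder α] (r : ι → α) (W : Submodule K (ι → K)) :
    Set ι :=
  {j | ∃ x ∈ W, x j ≠ 0 ∧ ∀ k, x k ≠ 0 → r k ≤ r j}

/-- The coordinate subspace of vectors supported on `J`. -/
def coordSub (K : Type) {ι : Type} [Field K] (J : Set ι) : Submodule K (ι → K) where
  carrier := {f | ∀ k, k ∉ J → f k = 0}
  add_mem' := by intro f g hf hg k hk; simp [hf k hk, hg k hk]
  zero_mem' := by intro k _; rfl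
  smul_mem' := by intro t f hf k hk; simp [hf k hk]

theorem coordSub_eq_span {K ι : Type} [Field K] [Fintype ι] (J : Set ι) :
    coordSub K J = Submodule.span K {f | ∃ j ∈ J, f = Pi.single j (1 : K)} := by
  apply le_antisymm
  · intro f hf
    rw [pi_eq_sum_univ' f]
    refine Submodule.sum_mem _ fun j _ => ?_
    by_cases hj : j ∈ J
    · refine Submodule.smul_mem _ _ (Submodule.subset_span ⟨j, hj, ?_⟩)
      funext k
      simp [Pi.single_apply, eq_comm]
    · rw [hf j hj, zero_smul]
      exact Submodule.zero_mem _
  · rw [Submodule.span_le]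
    rintro _ ⟨j, hj, rfl⟩ k hk
    exact Pi.single_eq_of_ne (fun h : k = j => hk (by rwa [h])) _

/-- The initial subspace has the same dimension as the original one. -/
theorem finrank_coordSub_leadSet {K ι α : Type} [Field K] [Fintype ι] [LinearOrder α]
    {r : ι → α} (hr : Function.Injective r) (W : Submodule K (ι → K)) :
    Module.finrank K (coordSub K (leadSet r W)) = Module.finrank K W := by
  have hmax : ∀ s : Finset ι, s.Nonempty → ∃ j ∈ s, ∀ k ∈ s, r k ≤ r j := fun s hs =>
    s.exists_max_image r hs
  apply le_antisymm
  · have hex : ∀ j : ι, ∃ x ∈ W, j ∈ leadSet r W → x j ≠ 0 ∧ ∀ k, x k ≠ 0 → r k ≤ r j := by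
      intro j
      by_cases hj : j ∈ leadSet r W
      · obtain ⟨x, hx, h⟩ := hj
        exact ⟨x, hx, fun _ => h⟩
      · exact ⟨0, W.zero_mem, fun h => absurd h hj⟩
    choose x hxW hx using hex
    let T : coordSub K (leadSet r W) →ₗ[K] W :=
      { toFun := fun f => ⟨∑ j, f.1 j • x j,
          Submodule.sum_mem _ fun j _ => Submodule.smul_mem _ _ (hxW j)⟩
        map_add' := by
          intro f g; ext1; simp [add_smul, Finset.sum_add_distrib]
        map_smul' := by
          intro t f; ext1; simp [mul_smul, Finset.smul_sum] }
    refine LinearMap.finrank_le_finrank_of_injective (f := T) ?_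
    rw [injective_iff_map_eq_zero]
    rintro ⟨f, hf⟩ h0
    have h0 : ∑ j, f j • x j = 0 := congrArg Subtype.val h0
    by_contra hne
    have hs : (Finset.univ.filter fun j => f j ≠ 0).Nonempty := by
      by_contra h
      apply hne
      ext j
      by_contra hj
      exact h ⟨j, by simpa using hj⟩
    obtain ⟨j, hj, hjmax⟩ := hmax _ hs
    simp only [Finset.mem_filter, Finset.mem_univ, true_and] at hj hjmax
    have hlead : ∀ k, f k ≠ 0 → k ∈ leadSet r W := fun k hk => by
      by_contra h; exact hk (hf k h)
    -- Only the vector with leading index `j` contributes to the `j`-th coordinate.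
    have hco : ∑ k, f k * x k j = f j * x j j := by
      refine Finset.sum_eq_single j (fun k _ hkj => ?_) (by simp)
      by_contra hk
      have hfk := left_ne_zero_of_mul hk
      have h1 := (hx k (hlead k hfk)).2 j (right_ne_zero_of_mul hk)
      exact hkj (hr (le_antisymm (hjmax k hfk) h1))
    have h2 := congrFun h0 j
    simp only [Finset.sum_apply, Pi.smul_apply, smul_eq_mul, Pi.zero_apply] at h2
    rw [hco] at h2
    exact mul_ne_zero hj (hx j (hlead j hj)).1 h2
  · let T : W →ₗ[K] coordSub K (leadSet r W) :=
      { toFun := fun f => ⟨fun k => if k ∈ leadSet r W then f.1 k else 0,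
          fun k hk => if_neg hk⟩
        map_add' := by
          intro f g; ext k; by_cases h : k ∈ leadSet r W <;> simp [h]
        map_smul' := by
          intro t f; ext k; by_cases h : k ∈ leadSet r W <;> simp [h] }
    refine LinearMap.finrank_le_finrank_of_injective (f := T) ?_
    rw [injective_iff_map_eq_zero]
    rintro ⟨f, hf⟩ h0
    by_contra hne
    have hs : (Finset.univ.filter fun j => f j ≠ 0).Nonempty := by
      by_contra h
      apply hne
      ext j
      by_contra hj
      exact h ⟨j, by simpa using hj⟩
    obtain ⟨j, hj, hjmax⟩ := hmax _ hs
    simp only [Finset.mem_filter, Finset.mem_univ, true_and] at hj hjmax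
    have hlead : j ∈ leadSet r W := ⟨f, hf, hj, hjmax⟩
    have h1 := congrFun (congrArg Subtype.val h0) j
    simp only [T, LinearMap.coe_mk, AddHom.coe_mk, if_pos hlead] at h1
    exact hj h1

/-! ### Bands as cyclic words -/

theorem WordReduced.getElem {Q : FinQuiver} : ∀ {l : List (Letter Q)}, WordReduced l →
    ∀ k (h : k + 1 < l.length), l[k + 1] ≠ linv l[k]
  | [], _, k, h => by simp at h
  | [_], _, k, h => by simp at h
  | c :: d :: l, hl, 0, _ => hl.1
  | c :: d :: l, hl, k + 1, h => by
    have := WordReduced.getElem (l := d :: l) hl.2 k (by simpa using h)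
    simpa using this

theorem length_listPow {β : Type} (u : List β) (k : ℕ) :
    (listPow u k).length = k * u.length := by
  induction k with
  | zero => simp [listPow]
  | succ k ih => simp [listPow, ih]; ring

theorem getElem_listPow {β : Type} (u : List β) (k i : ℕ) (h : i < (listPow u k).length)
    (h' : i % u.length < u.length) : (listPow u k)[i] = u[i % u.length] := by
  induction k generalizing i with
  | zero => simp [listPow] at h
  | succ k ih =>
    simp only [listPow]
    by_cases hi : i < u.length
    · rw [List.getElem_append_left hi]
      simp [Nat.mod_eq_of_lt hi]
    · rw [List.getElem_append_right (not_lt.1 hi)]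
      have hm : (i - u.length) % u.length = i % u.length := (Nat.mod_eq_sub_mod (not_lt.1 hi)).symm
      rw [ih (i - u.length) _ (by rw [hm]; exact h')]
      simp [hm]

/-- The cyclic successor on `Fin n`, as a permutation. -/
def cycPerm (n : ℕ) [NeZero n] : Equiv.Perm (Fin n) := Equiv.addRight 1

theorem cycPerm_val (n : ℕ) [NeZero n] (i : Fin n) : (cycPerm n i : ℕ) = (i + 1) % n := by
  simp [cycPerm, Fin.val_add]

theorem cycPerm_pow_val (n : ℕ) [NeZero n] (k : ℕ) (i : Fin n) :
    ((cycPerm n ^ k) i : ℕ) = (i + k) % n := by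
  induction k with
  | zero => simp [Nat.mod_eq_of_lt i.2]
  | succ k ih =>
    rw [pow_succ', Equiv.Perm.mul_apply, cycPerm_val, ih, Nat.mod_add_mod, add_assoc]

theorem cycPerm_trans (n : ℕ) [NeZero n] (i j : Fin n) : ∃ k : ℕ, (cycPerm n ^ k) i = j := by
  refine ⟨n - i + j, Fin.ext ?_⟩
  rw [cycPerm_pow_val, show (i : ℕ) + (n - i + j) = j + n by omega, Nat.add_mod_right,
    Nat.mod_eq_of_lt j.2]

theorem band_reduced {Q : FinQuiver} {D : BoundQuiver Q} {b : List (Letter Q)}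
    (hb : IsBand D b) [NeZero b.length] (i : Fin b.length) :
    b.get (cycPerm b.length i) ≠ linv (b.get i) := by
  have hred := (hb.2.1 2 (by norm_num)).red
  have hlen := length_listPow b 2
  have hi := i.2
  have h1 := hred.getElem i (by omega)
  have hpos : 0 < b.length := by omega
  rw [getElem_listPow b 2 _ _ (Nat.mod_lt _ hpos), getElem_listPow b 2 _ _ (Nat.mod_lt _ hpos)] at h1
  simpa [cycPerm_val, Nat.mod_eq_of_lt hi] using h1

theorem band_primitive {Q : FinQuiver} {D : BoundQuiver Q} {b : List (Letter Q)}
    (hb : IsBand D b) [NeZero b.length] (m : ℕ)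
    (hm : ∀ i, b.get ((cycPerm b.length ^ m) i) = b.get i) : cycPerm b.length ^ m = 1 := by
  set n := b.length with hn
  have hpos : 0 < n := Nat.pos_of_ne_zero (NeZero.ne n)
  set g := n.gcd m with hg
  have hgpos : 0 < g := Nat.gcd_pos_of_pos_left _ hpos
  obtain ⟨q, hq⟩ : g ∣ n := Nat.gcd_dvd_left _ _
  have hper : ∀ (k : ℕ) i, b.get ((cycPerm n ^ (m * k)) i) = b.get i := by
    intro k
    induction k with
    | zero => intro i; simp
    | succ k ih => intro i; rw [mul_add, mul_one, pow_add, Equiv.Perm.mul_apply, ih, hm]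
  -- A Bezout coefficient turns the period `m` into the period `gcd n m`.
  obtain ⟨t, ht⟩ : ∃ t : ℕ, (m * t) % n = g % n := by
    have h1 : ((m * (Nat.gcdB n m % n) : ℤ)) % n = (g : ℤ) % n := by
      rw [hg, Nat.gcd_eq_gcd_ab, Int.mul_emod, Int.emod_emod, ← Int.mul_emod,
        Int.add_emod, Int.mul_emod_right, zero_add, Int.emod_emod]
    have h0 : 0 ≤ Nat.gcdB n m % (n : ℤ) := Int.emod_nonneg _ (by omega)
    refine ⟨(Nat.gcdB n m % (n : ℤ)).toNat, ?_⟩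
    zify
    rw [Int.toNat_of_nonneg h0]
    exact h1
  have hperg : ∀ i, b.get ((cycPerm n ^ g) i) = b.get i := by
    intro i
    rw [← hper t i]
    congr 1
    apply Fin.ext
    rw [cycPerm_pow_val, cycPerm_pow_val, Nat.add_mod, ← ht, ← Nat.add_mod]
  have hpergk : ∀ (k : ℕ) i, b.get ((cycPerm n ^ (g * k)) i) = b.get i := by
    intro k
    induction k with
    | zero => intro i; simp
    | succ k ih => intro i; rw [mul_add, mul_one, pow_add, Equiv.Perm.mul_apply, ih, hperg]
  have hq1 : q = 1 := by
    by_contra hne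
    have hq0 : q ≠ 0 := by rintro rfl; omega
    have hgn : g ≤ n := Nat.gcd_le_left _ hpos
    have hlen : (b.take g).length = g := by simp [← hn, hgn]
    refine hb.2.2 (b.take g) q (by omega) (List.ext_getElem ?_ ?_)
    · rw [length_listPow, hlen, ← hn, hq, mul_comm]
    · intro i h1 h2
      have hlt : i % g < g := Nat.mod_lt _ hgpos
      rw [getElem_listPow _ _ _ _ (by rw [hlen]; exact hlt), List.getElem_take]
      have := hpergk (i / g) ⟨i % g, by omega⟩
      simp only [List.get_eq_getElem, cycPerm_pow_val, Nat.mod_add_div] at this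
      simp only [hlen]
      rw [← this]
      congr 1
      exact (Nat.mod_eq_of_lt h1).symm
  have hdvd : n ∣ m := by
    rw [hq1, mul_one] at hq
    rw [hq]
    exact Nat.gcd_dvd_right _ _
  ext i
  rw [cycPerm_pow_val, Nat.add_mod, Nat.mod_eq_zero_of_dvd hdvd, add_zero, Nat.mod_mod,
    Nat.mod_eq_of_lt i.2]
  rfl

/-- The matrix entries of a quasi-simple band module are nonzero exactly at the steps of the
cyclic word. For a reduced word the two summands of an entry cannot both occur. -/
theorem bandEntry_ne_zero_iff {Q : FinQuiver} {K : Type} [Field K] {D : BoundQuiver Q}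
    {b : List (Letter Q)} (hb : IsBand D b) [NeZero b.length] {lam : K} (hlam : lam ≠ 0)
    (a : Q.A) (k j : Fin b.length) (κ μ : Fin 1) :
    bandEntry K b hb.1 lam a k j κ μ ≠ 0 ↔ CycStep (cycPerm b.length) b.get a j k := by
  have hκ : κ = μ := Subsingleton.elim _ _
  have hL : ∀ i : Fin b.length, bLett b hb.1 i = b.get i := by
    intro i
    simp [bLett, Nat.mod_eq_of_lt i.2]
  have hs : ∀ i l : Fin b.length, ((i : ℕ) + 1) % b.length = l % b.length ↔
      l = cycPerm b.length i := by
    intro i l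
    rw [Fin.ext_iff, cycPerm_val, Nat.mod_eq_of_lt l.2, eq_comm]
  unfold bandEntry CycStep
  simp only [hL, hs, jordEntry, hκ, if_true]
  by_cases h1 : b.get j = Sum.inl a ∧ k = cycPerm b.length j
  · by_cases h2 : b.get k = Sum.inr a ∧ j = cycPerm b.length k
    · have := band_reduced hb j
      rw [← h1.2, h1.1, h2.1] at this
      exact absurd rfl this
    · rw [if_pos h1, if_neg h2, add_zero]
      refine iff_of_true ?_ (Or.inl ⟨h1.2, h1.1⟩)
      split_ifs
      · exact hlam
      · exact one_ne_zero
  · by_cases h2 : b.get k = Sum.inr a ∧ j = cycPerm b.length k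
    · rw [if_neg h1, if_pos h2, zero_add]
      refine iff_of_true ?_ (Or.inr ⟨h2.2, h2.1⟩)
      split_ifs
      · exact hlam
      · exact one_ne_zero
    · rw [if_neg h1, if_neg h2, add_zero]
      refine iff_of_false (fun h => h rfl) ?_
      rintro (h | h)
      · exact h1 ⟨h.2, h.1⟩
      · exact h2 ⟨h.2, h.1⟩

/-! ### The initial subrepresentation -/

/-- Every proper subrepresentation of a band module `M(b, λ, 1)` over a
special biserial algebra can be replaced by one of the same dimension vector which is
spanned at every vertex by standard basis vectors. -/
theorem subrep_of_band_module_dediagonalised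
    (K : Type) [Field K] [IsAlgClosed K] (Q : FinQuiver) (D : BoundQuiver Q)
    (hsb : SpecialBiserial D) (b : List (Letter Q)) (hb : IsBand D b)
    (lam : K) (hlam : lam ≠ 0)
    (L : QSubRep (bandRep K Q b hb.1 lam 1)) (hproper : ∃ i, L.L i ≠ ⊤) :
    ∃ (Lt : QSubRep (bandRep K Q b hb.1 lam 1)) (J : Set (Fin b.length)),
      (∀ i : Q.V, Lt.L i = Submodule.span K
        {f : ({j : Fin b.length // bVtx b hb.1 j = i} × Fin 1) → K |
          ∃ (j : Fin b.length) (hj : bVtx b hb.1 j = i), j ∈ J ∧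
            f = Pi.single
              ((⟨j, hj⟩, 0) : {j : Fin b.length // bVtx b hb.1 j = i} × Fin 1) (1 : K)}) ∧
      ∀ i, Module.finrank K (Lt.L i) = Module.finrank K (L.L i) := by
  have hNe : NeZero b.length := ⟨fun h => hb.1 (List.length_eq_zero_iff.1 h)⟩
  obtain ⟨α, _, r, hr, hinj⟩ := exists_injective_stepMonotone (cycPerm_trans b.length)
    (band_reduced hb) (band_primitive hb)
  let ρ : ∀ v : Q.V, ({j : Fin b.length // bVtx b hb.1 j = v} × Fin 1) → α := fun _ x => r x.1.1
  have hρ : ∀ v, Function.Injective (ρ v) := fun v x y h =>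
    Prod.ext (Subtype.ext (hinj h)) (Subsingleton.elim _ _)
  let S : ∀ v : Q.V, Set ({j : Fin b.length // bVtx b hb.1 j = v} × Fin 1) := fun v =>
    leadSet (K := K) (ρ v) (L.L v)
  have happ : ∀ (a : Q.A) (f : ({j : Fin b.length // bVtx b hb.1 j = Q.s a} × Fin 1) → K) k,
      (bandRep K Q b hb.1 lam 1).φ a f k =
        ∑ j, bandEntry K b hb.1 lam a (k.1.1 : ℕ) (j.1.1 : ℕ) k.2 j.2 * f j := fun a f k => rfl
  -- Leading positions are closed under steps, since an arrow carries the leading term of a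
  -- vector to that of its image as soon as it does not kill it.
  have hS : ∀ (a : Q.A) j k, j ∈ S (Q.s a) →
      CycStep (cycPerm b.length) b.get a j.1.1 k.1.1 → k ∈ S (Q.t a) := by
    rintro a j k ⟨x, hx, hxj, hmax⟩ hjk
    refine ⟨(bandRep K Q b hb.1 lam 1).φ a x, L.compat a x hx, ?_, ?_⟩
    · rw [happ, Finset.sum_eq_single j]
      · exact mul_ne_zero ((bandEntry_ne_zero_iff hb hlam _ _ _ _ _).2 hjk) hxj
      · intro j' _ hne
        by_contra h
        have h' := (bandEntry_ne_zero_iff hb hlam _ _ _ _ _).1 (left_ne_zero_of_mul h)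
        exact hne (hρ _ ((hr.eq_iff h' hjk).2 rfl))
      · simp
    · intro k' hk'
      rw [happ] at hk'
      obtain ⟨j', -, hj'⟩ := Finset.exists_ne_zero_of_sum_ne_zero hk'
      have h' := (bandEntry_ne_zero_iff hb hlam _ _ _ _ _).1 (left_ne_zero_of_mul hj')
      have hle := hmax j' (right_ne_zero_of_mul hj')
      exact not_lt.1 fun hlt => not_lt.2 hle ((hr _ _ _ _ _ hjk h').2 hlt)
  refine ⟨⟨fun v => coordSub K (S v), ?_⟩, {j | (⟨⟨j, rfl⟩, 0⟩ : _ × Fin 1) ∈ S (bVtx b hb.1 j)},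
    ?_, fun v => finrank_coordSub_leadSet (hρ v) (L.L v)⟩
  · intro a f hf k hk
    by_contra hne
    obtain ⟨j, -, hj⟩ := Finset.exists_ne_zero_of_sum_ne_zero
      fun h => hne ((happ a f k).trans h)
    have hstep := (bandEntry_ne_zero_iff hb hlam _ _ _ _ _).1 (left_ne_zero_of_mul hj)
    refine hk (hS a j k ?_ hstep)
    by_contra hjS
    exact right_ne_zero_of_mul hj (hf j hjS)
  · intro v
    refine (coordSub_eq_span (S v)).trans ?_
    congr 1
    ext f
    constructor
    · rintro ⟨⟨⟨j, rfl⟩, z⟩, hj, rfl⟩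
      obtain rfl : z = 0 := Subsingleton.elim _ _
      exact ⟨j, rfl, hj, by congr!⟩
    · rintro ⟨j, rfl, hj, rfl⟩
      exact ⟨_, hj, by congr!⟩
end

section
/- Let A = KQ/I be a special biserial algebra over an algebraically closed field K, b a band for A, λ ∈ K^×, r ≥ 1, and M = M(b,λ,r), with the thin representation T(b), the linear map ι : R^{Q0} → R^d, and the subspace R ⊆ R^d as defined. Then ι(D(M)) = D(T(b)) ∩ R. -/
/-!
Write `n` for the length of `b`, and identify positions `p` with the vertices of the cyclic quiver.

If `v` is semistable for the band module and `S` is a set of positions closed under the arrows of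
the cyclic quiver, the blocks over `S` form a subrepresentation of dimension `r * |S ∩ i|` at each
vertex `i`; dividing the resulting inequality by `r` gives semistability of the thin representation
(`closed_sum_nonpos`, `thin_of_band`).

Conversely, let `x` be semistable for the thin representation and let `x = ι(v)`. Then `x` is the
divergence of a nonnegative flow `f` on the arrows of the cyclic quiver (`exists_flow`): the arcs
running from a direct to an inverse letter are closed, so the partial sums of `x` leave room for a
common additive constant. Since the algebra is special biserial, the ends of arrows at each vertex
can be 2-coloured so that the two letters of `b` meeting at a position have different colours there
(`exists_colouring`). Let `h p` be the signed flow through the letter following `p`, and put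
`G p = ± (h p - x p / 2)`, the sign being the colour of that letter at `p`. Because the flows through
the two letters at `p` differ by `x p`, which only depends on the vertex of `p`, either letter gives
the same value of `G p`. Consequently, for each arrow `a` and each `τ > 0`, the sources of the
letters over `a` with flow at least `τ` are cut out among the positions over `s(a)` by a threshold
for `G`, and likewise for the targets (`isSegment_src`, `isSegment_tgt`).

Now let `N` be a subrepresentation of the band module. For each position take the increment at that
position of `dim (N ∩ K^U)` along the filtration of the positions over its vertex by `G`, plus the
corresponding increment for the reversed order, and call the result `m p`. The sum of `m p` over all
positions `p` above the vertex `i` is `2 dim N_i`. Over an initial or final segment `U`, `m` adds up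
to `dim (N ∩ K^U)` plus the dimension of the projection of `N` to `K^U` (`sum_mult`). If `U` consists
of the sources of letters over an arrow, both grow on passing to the targets, as the arrow acts
injectively by blocks (`BlockMap.le_inf`, `BlockMap.le_proj`). Integrating over the thresholds `τ`
(`layer_cake`) gives `2 ⟨v, dim N⟩ = ∑ f (m(source) - m(target)) ≤ 0`, which is
`core_inequality`. Jordan blocks enter only through their invertibility, so all `r` are treated at
once.
-/

attribute [local instance] Classical.propDecidable

/-! ### Dimensions of coordinate subspaces -/

/-- The vectors of `⊕_{vt j = i} K^r` supported on the blocks of the positions in `U`. -/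
def suppOn (K : Type) [Field K] {n : ℕ} {V : Type} (vt : Fin n → V) (r : ℕ) (i : V)
    (U : Finset (Fin n)) : Submodule K ({j : Fin n // vt j = i} × Fin r → K) where
  carrier := {x | ∀ p, p.1.1 ∉ U → x p = 0}
  zero_mem' := fun _ _ => rfl
  add_mem' := fun hx hy p hp => by simp [hx p hp, hy p hp]
  smul_mem' := fun c x hx p hp => by simp [hx p hp]

/-- The dimension of the part of `N` supported on the positions in `U`. -/
noncomputable def nDim {K : Type} [Field K] {n : ℕ} {V : Type} {vt : Fin n → V} {r : ℕ} {i : V}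
    (N : Submodule K ({j : Fin n // vt j = i} × Fin r → K)) (U : Finset (Fin n)) : ℕ :=
  Module.finrank K ↥(N ⊓ suppOn K vt r i U)

theorem nDim_univ {K : Type} [Field K] {n : ℕ} {V : Type} {vt : Fin n → V} {r : ℕ} {i : V}
    (N : Submodule K ({j : Fin n // vt j = i} × Fin r → K)) (U : Finset (Fin n))
    (hU : ∀ p, vt p = i → p ∈ U) : nDim N U = Module.finrank K N := by
  unfold nDim
  have : N ⊓ suppOn K vt r i U = N := by
    apply inf_eq_left.2
    intro x _ p hp
    exact absurd (hU _ p.1.2) hp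
  rw [this]

theorem nDim_empty {K : Type} [Field K] {n : ℕ} {V : Type} {vt : Fin n → V} {r : ℕ} {i : V}
    (N : Submodule K ({j : Fin n // vt j = i} × Fin r → K)) : nDim N ∅ = 0 := by
  unfold nDim
  have : N ⊓ suppOn K vt r i ∅ = ⊥ := by
    rw [eq_bot_iff]
    rintro x ⟨_, hx⟩
    rw [Submodule.mem_bot]
    funext p
    exact hx p (by simp)
  rw [this, finrank_bot]

theorem finrank_suppOn {K : Type} [Field K] {n : ℕ} {V : Type} (vt : Fin n → V) (r : ℕ) (i : V)
    (U : Finset (Fin n)) :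
    Module.finrank K (suppOn K vt r i U) = (U.filter (fun j => vt j = i)).card * r := by
  let e : suppOn K vt r i U ≃ₗ[K] ({j : Fin n // j ∈ U.filter (fun j => vt j = i)} × Fin r → K) :=
    { toFun := fun x p => x.1 (⟨p.1.1, (Finset.mem_filter.1 p.1.2).2⟩, p.2)
      map_add' := fun x y => rfl
      map_smul' := fun c x => rfl
      invFun := fun y => ⟨fun p => if h : p.1.1 ∈ U then
          y (⟨p.1.1, Finset.mem_filter.2 ⟨h, p.1.2⟩⟩, p.2) else 0, fun p hp => by simp [hp]⟩
      left_inv := by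
        intro x
        ext p
        by_cases h : p.1.1 ∈ U
        · simp [h]
        · simp [h, x.2 p h]
      right_inv := by
        intro y
        funext p
        simp [(Finset.mem_filter.1 p.1.2).1] }
  rw [e.finrank_eq, Module.finrank_fintype_fun_eq_card, Fintype.card_prod, Fintype.card_coe,
    Fintype.card_fin]

/-- How a linear map acts along a family `E` of arrows of the cyclic quiver lying over one arrow:
each block at `src c` is sent injectively to the block at `tgt c`, other blocks are not reached. -/
structure BlockMap {K : Type} [Field K] {n : ℕ} {V : Type} {vt : Fin n → V} {r : ℕ} {i k : V}
    (φ : ({j : Fin n // vt j = i} × Fin r → K) →ₗ[K] ({j : Fin n // vt j = k} × Fin r → K))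
    (src tgt : Fin n → Fin n) (E : Finset (Fin n)) (B : Fin n → (Fin r → K) →ₗ[K] (Fin r → K)) :
    Prop where
  inj : ∀ c, Function.Injective (B c)
  src_inj : ∀ c ∈ E, ∀ c' ∈ E, src c = src c' → c = c'
  vs : ∀ c ∈ E, vt (src c) = i
  vt : ∀ c ∈ E, vt (tgt c) = k
  act : ∀ c (hc : c ∈ E) x κ, φ x (⟨tgt c, vt c hc⟩, κ) =
    B c (fun μ => x (⟨src c, vs c hc⟩, μ)) κ
  zero : ∀ x p κ, (∀ c ∈ E, tgt c ≠ p.1) → φ x (p, κ) = 0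

/-- A map acting injectively by blocks embeds the part of `N` supported on the sources of `C` into
the part of `N'` supported on the targets. -/
theorem BlockMap.le_inf {K : Type} [Field K] {n : ℕ} {V : Type} {vt : Fin n → V} {r : ℕ} {i k : V}
    {φ : ({j : Fin n // vt j = i} × Fin r → K) →ₗ[K] ({j : Fin n // vt j = k} × Fin r → K)}
    {src tgt : Fin n → Fin n} {E : Finset (Fin n)} {B : Fin n → (Fin r → K) →ₗ[K] (Fin r → K)}
    (h : BlockMap φ src tgt E B)
    {N : Submodule K ({j : Fin n // vt j = i} × Fin r → K)}
    {N' : Submodule K ({j : Fin n // vt j = k} × Fin r → K)} (hN : ∀ x ∈ N, φ x ∈ N')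
    (C : Finset (Fin n)) (hC : C ⊆ E) :
    nDim N (C.image src) ≤ nDim N' (C.image tgt) := by
  have hm : ∀ x ∈ N ⊓ suppOn K vt r i (C.image src), φ x ∈ N' ⊓ suppOn K vt r k (C.image tgt) := by
    rintro x ⟨hx, hxs⟩
    refine ⟨hN x hx, ?_⟩
    rintro ⟨p, κ⟩ hp
    by_cases hE : ∀ c ∈ E, tgt c ≠ p.1
    · exact h.zero x p κ hE
    · push Not at hE
      obtain ⟨c, hc, hcp⟩ := hE
      have hp' : p = ⟨tgt c, h.vt c hc⟩ := Subtype.ext hcp.symm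
      subst hp'
      rw [h.act c hc]
      have : (fun μ => x (⟨src c, h.vs c hc⟩, μ)) = 0 := by
        funext μ
        apply hxs
        intro hmem
        obtain ⟨c', hc', he⟩ := Finset.mem_image.1 hmem
        have := h.src_inj c' (hC hc') c hc he
        subst this
        exact hp (Finset.mem_image_of_mem _ hc')
      rw [this]; simp
  apply LinearMap.finrank_le_finrank_of_injective (f := φ.restrict hm)
  rw [injective_iff_map_eq_zero]
  rintro ⟨x, hx, hxs⟩ hx0
  have hφ : φ x = 0 := congrArg Subtype.val hx0
  apply Subtype.ext
  funext p
  obtain ⟨p, μ⟩ := p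
  by_cases hp : p.1 ∈ C.image src
  · obtain ⟨c, hc, hcp⟩ := Finset.mem_image.1 hp
    have hp' : p = ⟨src c, h.vs c (hC hc)⟩ := Subtype.ext hcp.symm
    subst hp'
    have : B c (fun μ => x (⟨src c, h.vs c (hC hc)⟩, μ)) = 0 := by
      funext κ
      rw [← h.act c (hC hc), hφ]; rfl
    exact congrFun ((injective_iff_map_eq_zero _).1 (h.inj c) _ this) μ
  · exact hxs (p, μ) hp

/-- The projection of `N` to the blocks at the sources of `C` has dimension at most that of the
projection of `N'` to the blocks at the targets; the two dimensions are written here as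
`dim N - nDim N S` and `dim N' - nDim N' T`, with the subtractions moved across. -/
theorem BlockMap.le_proj {K : Type} [Field K] {n : ℕ} {V : Type} {vt : Fin n → V} {r : ℕ} {i k : V}
    {φ : ({j : Fin n // vt j = i} × Fin r → K) →ₗ[K] ({j : Fin n // vt j = k} × Fin r → K)}
    {src tgt : Fin n → Fin n} {E : Finset (Fin n)} {B : Fin n → (Fin r → K) →ₗ[K] (Fin r → K)}
    (h : BlockMap φ src tgt E B)
    {N : Submodule K ({j : Fin n // vt j = i} × Fin r → K)}
    {N' : Submodule K ({j : Fin n // vt j = k} × Fin r → K)} (hN : ∀ x ∈ N, φ x ∈ N')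
    (C : Finset (Fin n)) (hC : C ⊆ E) (S T : Finset (Fin n))
    (hS : ∀ p, vt p = i → (p ∈ S ↔ p ∉ C.image src))
    (hT : ∀ p, vt p = k → (p ∈ T ↔ p ∉ C.image tgt)) :
    Module.finrank K N + nDim N' T ≤ Module.finrank K N' + nDim N S := by
  let W := (suppOn K vt r k T).comap N'.subtype
  let f : N →ₗ[K] (N' ⧸ W) := W.mkQ ∘ₗ φ.restrict hN
  have h1 := LinearMap.finrank_range_add_finrank_ker f
  have h2 := Submodule.finrank_quotient_add_finrank W
  have h3 : Module.finrank K (LinearMap.range f) ≤ Module.finrank K (N' ⧸ W) :=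
    Submodule.finrank_le _
  have h4 : Module.finrank K W = nDim N' T := by
    unfold nDim
    rw [← Submodule.finrank_map_subtype_eq N' W, Submodule.map_comap_subtype]
  have h5 : Module.finrank K (LinearMap.ker f) ≤ nDim N S := by
    unfold nDim
    rw [← Submodule.finrank_map_subtype_eq N (LinearMap.ker f)]
    apply Submodule.finrank_mono
    rintro _ ⟨⟨x, hx⟩, hk, rfl⟩
    refine ⟨hx, ?_⟩
    have hk' : φ x ∈ suppOn K vt r k T := by
      have : φ.restrict hN ⟨x, hx⟩ ∈ W := by
        have hk2 : W.mkQ (φ.restrict hN ⟨x, hx⟩) = 0 := hk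
        rwa [Submodule.mkQ_apply, Submodule.Quotient.mk_eq_zero] at hk2
      exact this
    rintro ⟨p, μ⟩ hp
    have hp1 : p.1 ∈ C.image src := by
      by_contra hcon
      exact hp ((hS _ p.2).2 hcon)
    obtain ⟨c, hc, hcp⟩ := Finset.mem_image.1 hp1
    have hp' : p = ⟨src c, h.vs c (hC hc)⟩ := Subtype.ext hcp.symm
    subst hp'
    have : B c (fun μ => x (⟨src c, h.vs c (hC hc)⟩, μ)) = 0 := by
      funext κ
      rw [← h.act c (hC hc)]
      apply hk'
      intro hm
      exact (hT _ (h.vt c (hC hc))).1 hm (Finset.mem_image_of_mem _ hc)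
    exact congrFun ((injective_iff_map_eq_zero _).1 (h.inj c) _ this) μ
  omega

/-! ### Summation over thresholds and over initial segments -/

/-- Abel summation over the level sets of `f`. -/
theorem layer_cake {ι : Type} (C : Finset ι) (f h : ι → ℝ) (hf : ∀ c ∈ C, 0 ≤ f c)
    (H : ∀ t : ℝ, 0 < t → ∑ c ∈ C.filter (fun c => t ≤ f c), h c ≤ 0) :
    ∑ c ∈ C, f c * h c ≤ 0 := by
  induction hN : C.card using Nat.strong_induction_on generalizing C f with
  | _ N ih =>
    subst hN
    rcases C.eq_empty_or_nonempty with rfl | hne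
    · simp
    obtain ⟨c0, hc0, hmin⟩ := C.exists_min_image f hne
    have hsub : ∑ c ∈ C.filter (fun c => f c0 < f c), (f c - f c0) * h c ≤ 0 := by
      refine ih _ ?_ _ (fun c => f c - f c0) ?_ ?_ rfl
      · apply Finset.card_lt_card
        refine Finset.filter_ssubset.2 ⟨c0, hc0, lt_irrefl _⟩
      · intro c hc
        exact sub_nonneg.2 (Finset.mem_filter.1 hc).2.le
      · intro t ht
        have := H (t + f c0) (by have := hf c0 hc0; linarith)
        convert this using 2
        ext c
        simp only [Finset.mem_filter]
        constructor
        · rintro ⟨⟨h1, h2⟩, h3⟩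
          exact ⟨h1, by linarith⟩
        · rintro ⟨h1, h3⟩
          exact ⟨⟨h1, by linarith⟩, by linarith⟩
    have hext : ∑ c ∈ C.filter (fun c => f c0 < f c), (f c - f c0) * h c
        = ∑ c ∈ C, (f c - f c0) * h c := by
      apply Finset.sum_subset (Finset.filter_subset _ _)
      intro c hc hc'
      have : f c = f c0 := le_antisymm
        (not_lt.1 fun hlt => hc' (Finset.mem_filter.2 ⟨hc, hlt⟩)) (hmin c hc)
      rw [this]; ring
    have hwhole : f c0 * ∑ c ∈ C, h c ≤ 0 := by
      rcases (hf c0 hc0).eq_or_lt with h0 | h0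
      · rw [← h0]; simp
      · have := H (f c0) h0
        rw [Finset.filter_true_of_mem hmin] at this
        exact mul_nonpos_of_nonneg_of_nonpos h0.le this
    have : ∑ c ∈ C, f c * h c = ∑ c ∈ C, (f c - f c0) * h c + f c0 * ∑ c ∈ C, h c := by
      rw [Finset.mul_sum, ← Finset.sum_add_distrib]
      exact Finset.sum_congr rfl fun c _ => by ring
    linarith

/-- The increment at `p` of a set function `F` along the chain of final segments of `J` for the
order given by `ρ`. -/
noncomputable def incr {ι O : Type} [LinearOrder O] (ρ : ι → O) (F : Finset ι → ℝ)
    (J : Finset ι) (p : ι) : ℝ :=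
  F (J.filter (fun q => ρ p ≤ ρ q)) - F (J.filter (fun q => ρ p < ρ q))

theorem sum_incr_upper {ι O : Type} [DecidableEq ι] [LinearOrder O] {ρ : ι → O} (hρ : Function.Injective ρ)
    (F : Finset ι → ℝ) (J U : Finset ι) (hUJ : U ⊆ J)
    (hU : ∀ p ∈ U, ∀ q ∈ J, ρ p < ρ q → q ∈ U) :
    ∑ p ∈ U, incr ρ F J p = F U - F ∅ := by
  induction hN : U.card using Nat.strong_induction_on generalizing U with
  | _ N ih =>
    subst hN
    rcases U.eq_empty_or_nonempty with rfl | hne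
    · simp
    obtain ⟨p, hp, hmin⟩ := U.exists_min_image ρ hne
    have hge : J.filter (fun q => ρ p ≤ ρ q) = U := by
      ext q
      simp only [Finset.mem_filter]
      constructor
      · rintro ⟨hq, hle⟩
        rcases hle.eq_or_lt with he | hlt
        · rwa [← hρ he]
        · exact hU p hp q hq hlt
      · exact fun hq => ⟨hUJ hq, hmin q hq⟩
    have hgt : J.filter (fun q => ρ p < ρ q) = U.erase p := by
      ext q
      simp only [Finset.mem_filter, Finset.mem_erase]
      constructor
      · rintro ⟨hq, hlt⟩
        exact ⟨fun he => (he ▸ hlt).false, hU p hp q hq hlt⟩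
      · rintro ⟨hne, hq⟩
        exact ⟨hUJ hq, lt_of_le_of_ne (hmin q hq) fun he => hne (hρ he).symm⟩
    rw [← Finset.add_sum_erase _ _ hp, ih _ (Finset.card_erase_lt_of_mem hp) (U.erase p)
      ((Finset.erase_subset _ _).trans hUJ) ?_ rfl]
    · unfold incr
      rw [hge, hgt]; ring
    · intro q hq q' hq' hlt
      refine Finset.mem_erase.2 ⟨?_, hU q (Finset.mem_of_mem_erase hq) q' hq' hlt⟩
      rintro rfl
      exact absurd (hmin q (Finset.mem_of_mem_erase hq)) (not_le.2 hlt)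

theorem sum_incr_lower {ι O : Type} [DecidableEq ι] [LinearOrder O] {ρ : ι → O} (hρ : Function.Injective ρ)
    (F : Finset ι → ℝ) (J U : Finset ι) (hUJ : U ⊆ J)
    (hU : ∀ p ∈ U, ∀ q ∈ J, ρ q < ρ p → q ∈ U) :
    ∑ p ∈ U, incr ρ F J p = F J - F (J \ U) := by
  have h1 := sum_incr_upper hρ F J J le_rfl (fun _ _ q hq _ => hq)
  have h2 := sum_incr_upper hρ F J (J \ U) Finset.sdiff_subset (by
    intro p hp q hq hlt
    refine Finset.mem_sdiff.2 ⟨hq, fun hqU => ?_⟩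
    exact (Finset.mem_sdiff.1 hp).2 (hU q hqU p (Finset.mem_sdiff.1 hp).1 hlt))
  have h3 := Finset.sum_sdiff (f := incr ρ F J) hUJ
  linarith

/-- A linear order on `Fin n` refining the preorder given by `G`. -/
noncomputable def rankOf {n : ℕ} (G : Fin n → ℝ) (p : Fin n) : ℝ ×ₗ Fin n := toLex (G p, p)

theorem rankOf_inj {n : ℕ} (G : Fin n → ℝ) : Function.Injective (rankOf G) := by
  intro p q h
  exact (Prod.ext_iff.1 (toLex.injective h)).2

theorem le_of_rankOf_lt {n : ℕ} {G : Fin n → ℝ} {p q : Fin n} (h : rankOf G p < rankOf G q) :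
    G p ≤ G q := by
  rcases Prod.Lex.toLex_lt_toLex.1 h with h | h
  · exact h.le
  · exact h.1.le

/-- The sum of the increments at `p` for the order given by `G` and for the reversed order. -/
noncomputable def mult {n : ℕ} (G : Fin n → ℝ) (F : Finset (Fin n) → ℝ) (J : Finset (Fin n))
    (p : Fin n) : ℝ :=
  incr (rankOf G) F J p + incr (fun q => OrderDual.toDual (rankOf G q)) F J p

/-- `U` is an initial or a final segment of `J` for the preorder given by `G`. -/
def IsSegment {n : ℕ} (G : Fin n → ℝ) (J U : Finset (Fin n)) : Prop :=
  U ⊆ J ∧ ((∀ p ∈ U, ∀ q ∈ J, G p ≤ G q → q ∈ U) ∨ (∀ p ∈ U, ∀ q ∈ J, G q ≤ G p → q ∈ U))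

/-- On initial and on final segments the two orders contribute the same two terms, in one order
or the other. -/
theorem sum_mult {n : ℕ} {G : Fin n → ℝ} (F : Finset (Fin n) → ℝ) (hF : F ∅ = 0)
    {J U : Finset (Fin n)} (h : IsSegment G J U) :
    ∑ p ∈ U, mult G F J p = F U + (F J - F (J \ U)) := by
  have hd : Function.Injective (fun q => OrderDual.toDual (rankOf G q)) :=
    OrderDual.toDual.injective.comp (rankOf_inj G)
  unfold mult
  rw [Finset.sum_add_distrib]
  rcases h with ⟨hJ, h | h⟩
  · rw [sum_incr_upper (rankOf_inj G) F J U hJ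
        (fun p hp q hq hlt => h p hp q hq (le_of_rankOf_lt hlt)),
      sum_incr_lower hd F J U hJ
        (fun p hp q hq hlt => h p hp q hq (le_of_rankOf_lt (OrderDual.toDual_lt_toDual.1 hlt)))]
    linarith
  · rw [sum_incr_lower (rankOf_inj G) F J U hJ
        (fun p hp q hq hlt => h p hp q hq (le_of_rankOf_lt hlt)),
      sum_incr_upper hd F J U hJ
        (fun p hp q hq hlt => h p hp q hq (le_of_rankOf_lt (OrderDual.toDual_lt_toDual.1 hlt)))]
    linarith

/-! ### The semistability inequality -/

/-- The positions lying over the vertex `i`. -/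
def posOver {n : ℕ} {V : Type} [DecidableEq V] (vt : Fin n → V) (i : V) : Finset (Fin n) :=
  Finset.univ.filter (fun p => vt p = i)

theorem sum_image_src {n : ℕ} (C : Finset (Fin n)) (src : Fin n → Fin n)
    (hinj : ∀ c ∈ C, ∀ c' ∈ C, src c = src c' → c = c') {V : Type} [DecidableEq V]
    {vt : Fin n → V} {i : V}
    (hi : ∀ c ∈ C, vt (src c) = i) (G : Fin n → ℝ) (F : V → Finset (Fin n) → ℝ)
    (hF : F i ∅ = 0) (hG : IsSegment G (posOver vt i) (C.image src)) :
    ∑ c ∈ C, mult G (F (vt (src c))) (posOver vt (vt (src c))) (src c) =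
      F i (C.image src) + (F i (posOver vt i) - F i (posOver vt i \ C.image src)) := by
  rw [← sum_mult (F i) hF hG, Finset.sum_image (fun c hc c' hc' h => hinj c hc c' hc' h)]
  exact Finset.sum_congr rfl fun c hc => by rw [hi c hc]

/-- If `v` pulls back to the divergence of a nonnegative flow `f` on the arrows of the cyclic
quiver, and some preorder `G` on positions turns the superlevel sets of `f` over each arrow into
initial or final segments at both ends, then `v` pairs nonpositively with every subrepresentation
`N`. -/
theorem core_inequality {K : Type} [Field K] {n r : ℕ} {V A : Type} [Fintype V] [DecidableEq V]
    [Fintype A] [DecidableEq A] (s t : A → V) (vt : Fin n → V) (src tgt : Fin n → Fin n)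
    (und : Fin n → A)
    (hs : ∀ c, vt (src c) = s (und c)) (ht : ∀ c, vt (tgt c) = t (und c))
    (src_inj : ∀ c c', und c = und c' → src c = src c' → c = c')
    (tgt_inj : ∀ c c', und c = und c' → tgt c = tgt c' → c = c')
    (N : ∀ i, Submodule K ({j : Fin n // vt j = i} × Fin r → K))
    (φ : ∀ a, ({j : Fin n // vt j = s a} × Fin r → K) →ₗ[K] ({j : Fin n // vt j = t a} × Fin r → K))
    (hN : ∀ a, ∀ x ∈ N (s a), φ a x ∈ N (t a))
    (B : Fin n → (Fin r → K) →ₗ[K] (Fin r → K))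
    (hφ : ∀ a, BlockMap (φ a) src tgt (Finset.univ.filter (fun c => und c = a)) B)
    (v : V → ℝ) (f : Fin n → ℝ) (hf : ∀ c, 0 ≤ f c)
    (hflow : ∀ m : Fin n → ℝ, ∑ p, v (vt p) * m p = ∑ c, f c * (m (src c) - m (tgt c)))
    (G : Fin n → ℝ)
    (hGs : ∀ a, ∀ τ : ℝ, 0 < τ → IsSegment G (posOver vt (s a))
      (((Finset.univ.filter (fun c => und c = a)).filter (fun c => τ ≤ f c)).image src))
    (hGt : ∀ a, ∀ τ : ℝ, 0 < τ → IsSegment G (posOver vt (t a))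
      (((Finset.univ.filter (fun c => und c = a)).filter (fun c => τ ≤ f c)).image tgt)) :
    ∑ i, v i * (Module.finrank K (N i) : ℝ) ≤ 0 := by
  let F : V → Finset (Fin n) → ℝ := fun i U => (nDim (N i) U : ℝ)
  have hF0 : ∀ i, F i ∅ = 0 := fun i => by simp [F, nDim_empty]
  have hFJ : ∀ i, F i (posOver vt i) = Module.finrank K (N i) := fun i => by
    simp only [F]
    rw [nDim_univ]
    intro p hp
    simpa [posOver] using hp
  let m : Fin n → ℝ := fun p => mult G (F (vt p)) (posOver vt (vt p)) p
  have h1 : ∑ p, v (vt p) * m p = 2 * ∑ i, v i * (Module.finrank K (N i) : ℝ) := by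
    rw [← Finset.sum_fiberwise (s := Finset.univ) (g := vt), Finset.mul_sum]
    refine Finset.sum_congr rfl fun i _ => ?_
    have : ∑ p ∈ posOver vt i, mult G (F i) (posOver vt i) p = 2 * Module.finrank K (N i) := by
      rw [sum_mult (F i) (hF0 i) (U := posOver vt i) ⟨le_rfl, Or.inl fun _ _ q hq _ => hq⟩,
        Finset.sdiff_self, hF0, hFJ]
      ring
    calc _ = ∑ p ∈ posOver vt i, v i * mult G (F i) (posOver vt i) p := by
          refine Finset.sum_congr rfl fun p hp => ?_
          have : vt p = i := (Finset.mem_filter.1 hp).2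
          simp only [m, this]
      _ = _ := by rw [← Finset.mul_sum, this]; ring
  have h2 : ∑ c, f c * (m (src c) - m (tgt c)) ≤ 0 := by
    rw [← Finset.sum_fiberwise (s := Finset.univ) (g := und)]
    refine Finset.sum_nonpos fun a _ => ?_
    refine layer_cake _ f _ (fun c _ => hf c) fun τ hτ => ?_
    set E := Finset.univ.filter (fun c => und c = a) with hE
    set C := E.filter (fun c => τ ≤ f c) with hC
    have hCE : C ⊆ E := Finset.filter_subset _ _
    have hund : ∀ c ∈ C, und c = a := fun c hc => (Finset.mem_filter.1 (hCE hc)).2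
    rw [Finset.sum_sub_distrib]
    have e1 : ∑ c ∈ C, m (src c) = _ := sum_image_src C src
      (fun c hc c' hc' => src_inj c c' ((hund c hc).trans (hund c' hc').symm))
      (vt := vt) (i := s a) (fun c hc => by rw [hs, hund c hc]) G F (hF0 _) (hGs a τ hτ)
    have e2 : ∑ c ∈ C, m (tgt c) = _ := sum_image_src C tgt
      (fun c hc c' hc' => tgt_inj c c' ((hund c hc).trans (hund c' hc').symm))
      (vt := vt) (i := t a) (fun c hc => by rw [ht, hund c hc]) G F (hF0 _) (hGt a τ hτ)
    rw [e1, e2, hFJ, hFJ]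
    have i1 := (hφ a).le_inf (hN a) C hCE
    have i2 := (hφ a).le_proj (hN a) C hCE (posOver vt (s a) \ C.image src)
      (posOver vt (t a) \ C.image tgt)
      (fun p hp => by simp [posOver, hp]) (fun p hp => by simp [posOver, hp])
    simp only [F]
    have i1' : (nDim (N (s a)) (C.image src) : ℝ) ≤ nDim (N (t a)) (C.image tgt) := by
      exact_mod_cast i1
    have i2' : (Module.finrank K (N (s a)) : ℝ) + nDim (N (t a)) (posOver vt (t a) \ C.image tgt) ≤
        Module.finrank K (N (t a)) + nDim (N (s a)) (posOver vt (s a) \ C.image src) := by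
      exact_mod_cast i2
    linarith
  rw [← hflow m, h1] at h2
  linarith

/-! ### Flows on the cyclic quiver -/

theorem cycSucc_val {n : ℕ} (j : Fin n) :
    (cycSucc j : ℕ) = if (j : ℕ) + 1 = n then 0 else (j : ℕ) + 1 := by
  have := j.2
  show ((j : ℕ) + 1) % n = _
  split_ifs with h
  · rw [h, Nat.mod_self]
  · exact Nat.mod_eq_of_lt (by omega)

theorem cycSucc_injective {n : ℕ} : Function.Injective (cycSucc : Fin n → Fin n) := by
  intro j k h
  have h' := congrArg Fin.val h
  rw [cycSucc_val, cycSucc_val] at h'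
  ext
  split_ifs at h' <;> omega

theorem cycSucc_bijective {n : ℕ} : Function.Bijective (cycSucc : Fin n → Fin n) :=
  Finite.injective_iff_bijective.1 cycSucc_injective

theorem thin_closed_sum_nonpos {K : Type} [Field K] (R : FinQuiver)
    {x : R.V → ℝ} (hx : x ∈ stabSpace (thinRep K R)) (S : R.V → Prop)
    (hS : ∀ c, S (R.s c) → S (R.t c)) : ∑ p, (if S p then x p else 0) ≤ 0 := by
  let N : QSubRep (thinRep K R) :=
    { L := fun i => if S i then (⊤ : Submodule K ((thinRep K R).M i)) else ⊥
      compat := by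
        intro a y hy
        by_cases h : S (R.s a)
        · rw [if_pos (hS a h)]
          exact Submodule.mem_top
        · rw [if_neg h, Submodule.mem_bot] at hy
          rw [hy, map_zero]
          exact Submodule.zero_mem _ }
  have hN : ∀ p, Module.finrank K (N.L p) = if S p then 1 else 0 := by
    intro p
    change Module.finrank K ↥(if S p then (⊤ : Submodule K ((thinRep K R).M p)) else ⊥) = _
    by_cases h : S p
    · rw [if_pos h, finrank_top, if_pos h]
      exact Module.finrank_self K
    · rw [if_neg h, if_neg h]
      exact finrank_bot K _
  refine le_trans (le_of_eq ?_) (hx.2 N)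
  unfold stabInner
  refine Finset.sum_congr rfl fun p _ => ?_
  change _ = x p * ((Module.finrank K (N.L p) : ℕ) : ℝ)
  rw [hN]
  split_ifs <;> simp

/-- A finite family of lower bounds below a finite family of upper bounds leaves room for a real
number in between. -/
theorem exists_between_families {n : ℕ} (H : Fin n → ℝ) (D : Fin n → Prop)
    (h : ∀ j k, D j → ¬ D k → H k ≤ H j) :
    ∃ σ : ℝ, (∀ j, D j → 0 ≤ H j + σ) ∧ (∀ k, ¬ D k → H k + σ ≤ 0) := by
  rcases (Finset.univ.filter D).eq_empty_or_nonempty with he | hne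
  · have hD : ∀ k, ¬ D k := fun k hk => by
      have : k ∈ Finset.univ.filter D := by simp [hk]
      rw [he] at this
      simp at this
    refine ⟨-∑ k, |H k|, fun j hj => absurd hj (hD j), fun k _ => ?_⟩
    have := Finset.single_le_sum (f := fun k => |H k|) (fun i _ => abs_nonneg _)
      (Finset.mem_univ k)
    have h2 := le_abs_self (H k)
    linarith
  · obtain ⟨j0, hj0, hmin⟩ := Finset.exists_min_image _ H hne
    refine ⟨-H j0, fun j hj => ?_, fun k hk => ?_⟩
    · have := hmin j (by simp [hj])
      linarith
    · have := h j0 k (Finset.mem_filter.1 hj0).2 hk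
      linarith

/-- A vector in the stability space of the thin module is the divergence of a flow along the arrows.
Here `h j` is the flow through letter `j` in the direction of the word; it is nonnegative on direct
and nonpositive on inverse letters. -/
theorem exists_flow {K : Type} [Field K] (Q : FinQuiver) (b : List (Letter Q))
    {x : Fin b.length → ℝ} (hx : x ∈ stabSpace (thinRep K (bandQuiver Q b))) :
    ∃ h : Fin b.length → ℝ, (∀ j, x (cycSucc j) = h (cycSucc j) - h j) ∧
      (∀ j a, b.get j = Sum.inl a → 0 ≤ h j) ∧ (∀ j a, b.get j = Sum.inr a → h j ≤ 0) := by
  have htot : ∑ p, x p = 0 := by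
    have := hx.1
    unfold stabInner at this
    rw [← this]
    refine Finset.sum_congr rfl fun p _ => ?_
    have : (thinRep K (bandQuiver Q b)).dimVec p = 1 := Module.finrank_self K
    rw [this, Nat.cast_one, mul_one]
  let H : Fin b.length → ℝ := fun j => ∑ p : Fin b.length, if (p : ℕ) ≤ j then x p else 0
  have hsucc : ∀ j, x (cycSucc j) = H (cycSucc j) - H j := by
    intro j
    have hv := cycSucc_val j
    have hj := j.2
    simp only [H]
    by_cases hlast : (j : ℕ) + 1 = b.length
    · rw [if_pos hlast] at hv
      have e1 : ∑ p : Fin b.length, (if (p : ℕ) ≤ j then x p else 0) = 0 := by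
        rw [← htot]
        refine Finset.sum_congr rfl fun p _ => if_pos ?_
        have := p.2
        omega
      rw [e1, sub_zero, Finset.sum_eq_single (cycSucc j)]
      · simp
      · intro p _ hp
        rw [if_neg]
        intro hle
        apply hp
        ext
        omega
      · simp
    · rw [if_neg hlast] at hv
      rw [← Finset.sum_sub_distrib, Finset.sum_eq_single (cycSucc j)]
      · rw [if_pos le_rfl, if_neg (by omega), sub_zero]
      · intro p _ hp
        have hne : (p : ℕ) ≠ cycSucc j := fun h => hp (Fin.ext h)
        by_cases hle : (p : ℕ) ≤ j
        · rw [if_pos hle, if_pos (by omega), sub_self]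
        · rw [if_neg hle, if_neg (by omega), sub_self]
      · simp
  -- The arc from a direct letter `j` to an inverse letter `k` is closed under arrows.
  have hcmp : ∀ j k, (∃ a, b.get j = Sum.inl a) → ¬ (∃ a, b.get k = Sum.inl a) → H k ≤ H j := by
    rintro j k ⟨aj, haj⟩ hk
    have hjk : j ≠ k := by
      rintro rfl
      exact hk ⟨aj, haj⟩
    have hjk' : (j : ℕ) ≠ k := fun h => hjk (Fin.ext h)
    let S : Fin b.length → Prop := fun p =>
      if (j : ℕ) < k then (j : ℕ) < p ∧ (p : ℕ) ≤ k else (j : ℕ) < p ∨ (p : ℕ) ≤ k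
    have hS := thin_closed_sum_nonpos (bandQuiver Q b) hx S (by
      intro c
      have hv := cycSucc_val c
      have hc := c.2
      have hj := j.2
      have hk2 := k.2
      rcases hbc : b.get c with a | a
      · have h1 : (bandQuiver Q b).s c = c := by simp only [bandQuiver, hbc]
        have h2 : (bandQuiver Q b).t c = cycSucc c := by simp only [bandQuiver, hbc]
        have hck : (c : ℕ) ≠ k := fun h => hk ⟨a, by rw [← Fin.ext h, hbc]⟩
        rw [h1, h2]
        simp only [S]
        split_ifs at hv ⊢ <;> omega
      · have h1 : (bandQuiver Q b).s c = cycSucc c := by simp only [bandQuiver, hbc]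
        have h2 : (bandQuiver Q b).t c = c := by simp only [bandQuiver, hbc]
        have hcj : (c : ℕ) ≠ j := fun h => by
          rw [Fin.ext h, haj] at hbc
          cases hbc
        rw [h1, h2]
        simp only [S]
        split_ifs at hv ⊢ <;> omega)
    by_cases hlt : (j : ℕ) < k
    · have : ∑ p, (if S p then x p else 0) = H k - H j := by
        simp only [H]
        rw [← Finset.sum_sub_distrib]
        refine Finset.sum_congr rfl fun p _ => ?_
        simp only [S, if_pos hlt]
        split_ifs <;> first | ring1 | (exfalso; omega)
      have hS' : ∑ p, (if S p then x p else 0) ≤ 0 := by convert hS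
      linarith
    · have : ∑ p, (if S p then x p else 0) = H k + (∑ p, x p - H j) := by
        simp only [H]
        rw [← Finset.sum_sub_distrib, ← Finset.sum_add_distrib]
        refine Finset.sum_congr rfl fun p _ => ?_
        simp only [S, if_neg hlt]
        split_ifs <;> first | ring1 | (exfalso; omega)
      have hS' : ∑ p, (if S p then x p else 0) ≤ 0 := by convert hS
      linarith
  obtain ⟨σ, h1, h2⟩ := exists_between_families H _ hcmp
  refine ⟨fun j => H j + σ, fun j => ?_, fun j a ha => h1 j ⟨a, ha⟩, fun j a ha => h2 j ?_⟩
  · rw [hsucc]; ring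
  · rintro ⟨a', ha'⟩
    rw [ha] at ha'
    cases ha'

/-! ### Local structure of bands -/

theorem wordComposable_pair {Q : FinQuiver} (c d : Letter Q) (l₂ : List (Letter Q)) :
    ∀ l₁ : List (Letter Q), WordComposable (l₁ ++ c :: d :: l₂) → ltgt c = lsrc d
  | [], h => h.1
  | [_], h => h.2.1
  | _ :: e :: l, h => wordComposable_pair c d l₂ (e :: l) h.2

theorem wordReduced_pair {Q : FinQuiver} (c d : Letter Q) (l₂ : List (Letter Q)) :
    ∀ l₁ : List (Letter Q), WordReduced (l₁ ++ c :: d :: l₂) → d ≠ linv c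
  | [], h => h.1
  | [_], h => h.2.1
  | _ :: e :: l, h => wordReduced_pair c d l₂ (e :: l) h.2

/-- Cyclically consecutive letters of a band are consecutive in its square. -/
theorem band_pair {Q : FinQuiver} (b : List (Letter Q)) (j : Fin b.length) :
    ∃ l₁ l₂, listPow b 2 = l₁ ++ b.get j :: b.get (cycSucc j) :: l₂ := by
  have hw : listPow b 2 = b ++ b := by simp [listPow]
  have hj := j.2
  have hv := cycSucc_val j
  have h1 : (j : ℕ) < (b ++ b).length := by simp; omega
  have h2 : (j : ℕ) + 1 < (b ++ b).length := by simp; omega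
  refine ⟨(b ++ b).take j, (b ++ b).drop (j + 2), ?_⟩
  rw [hw]
  have e1 : (b ++ b)[(j : ℕ)] = b.get j := by
    rw [List.getElem_append_left hj]; rfl
  have e2 : (b ++ b)[(j : ℕ) + 1] = b.get (cycSucc j) := by
    by_cases hlast : (j : ℕ) + 1 = b.length
    · rw [List.getElem_append_right (by omega)]
      simp only [List.get_eq_getElem, hv, if_pos hlast]
      congr 1
      omega
    · rw [List.getElem_append_left (by omega)]
      simp only [List.get_eq_getElem, hv, if_neg hlast]
  conv_lhs => rw [← List.take_append_drop j (b ++ b), List.drop_eq_getElem_cons h1,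
    List.drop_eq_getElem_cons h2, e1, e2]

/-- What the string conditions say about cyclically consecutive letters. -/
structure CyclicString {Q : FinQuiver} (D : BoundQuiver Q) (b : List (Letter Q)) : Prop where
  comp : ∀ j, ltgt (b.get j) = lsrc (b.get (cycSucc j))
  red : ∀ j, b.get (cycSucc j) ≠ linv (b.get j)
  dir : ∀ j a c, b.get j = Sum.inl a → b.get (cycSucc j) = Sum.inl c → ¬ D.rel [a, c]
  inv : ∀ j a c, b.get j = Sum.inr a → b.get (cycSucc j) = Sum.inr c → ¬ D.rel [c, a]

theorem cyclicString_of_isBand {Q : FinQuiver} {D : BoundQuiver Q} {b : List (Letter Q)}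
    (hb : IsBand D b) : CyclicString D b := by
  have hstr := hb.2.1 2 (by norm_num)
  constructor
  · intro j
    obtain ⟨l₁, l₂, h⟩ := band_pair b j
    exact wordComposable_pair _ _ l₂ l₁ (h ▸ hstr.comp)
  · intro j
    obtain ⟨l₁, l₂, h⟩ := band_pair b j
    exact wordReduced_pair _ _ l₂ l₁ (h ▸ hstr.red)
  · intro j a c h1 h2
    obtain ⟨l₁, l₂, h⟩ := band_pair b j
    apply hstr.avoid
    refine ⟨l₁, l₂, ?_⟩
    rw [h, h1, h2]; simp
  · intro j a c h1 h2
    obtain ⟨l₁, l₂, h⟩ := band_pair b j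
    apply hstr.avoid_inv
    refine ⟨l₁, l₂, ?_⟩
    rw [h, h1, h2]; simp

theorem exists_separator {A : Type} [Finite A] (P : A → Prop)
    (h : Set.ncard {a | P a} ≤ 2) : ∃ p : A → Prop, ∀ a a', P a → P a' → a ≠ a' → (p a ↔ ¬ p a') := by
  by_cases hne : ∃ a0, P a0
  · obtain ⟨a0, h0⟩ := hne
    refine ⟨fun a => a = a0, fun a a' ha ha' hn => ?_⟩
    constructor
    · rintro rfl h'
      exact hn h'.symm
    · intro h'
      by_contra hcon
      have hsub : ({a, a', a0} : Set A) ⊆ {a | P a} := by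
        rintro y (rfl | rfl | rfl) <;> assumption
      have h3 : Set.ncard ({a, a', a0} : Set A) = 3 := by
        rw [Set.ncard_eq_three]
        exact ⟨a, a', a0, hn, hcon, h', rfl⟩
      have := Set.ncard_le_ncard hsub (Set.toFinite _)
      omega
  · push Not at hne
    exact ⟨fun _ => True, fun a _ ha => absurd ha (hne a)⟩

/-- At every vertex the ends of the incident arrows can be coloured with two colours, so that two
ends through which a string can pass consecutively, or two outgoing, or two incoming ends have
different colours. `so a` is the colour of the end of `a` at its source and `si a` the one at its
target. -/
theorem exists_colouring {Q : FinQuiver} {D : BoundQuiver Q} (hsb : SpecialBiserial D) :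
    ∃ so si : Q.A → Prop,
      (∀ a a', Q.s a = Q.s a' → a ≠ a' → (so a ↔ ¬ so a')) ∧
      (∀ a a', Q.t a = Q.t a' → a ≠ a' → (si a ↔ ¬ si a')) ∧
      (∀ a c, Q.t a = Q.s c → ¬ D.rel [a, c] → (si a ↔ ¬ so c)) := by
  obtain ⟨ho, hi, hR, hL⟩ := hsb
  choose po hpo using fun v => exists_separator (fun a : Q.A => Q.s a = v) (ho v)
  choose pi hpi using fun v => exists_separator (fun a : Q.A => Q.t a = v) (hi v)
  -- Allowed passages form a partial matching of incoming and outgoing arrows, so all of them at a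
  -- given vertex agree on whether the separators coincide; `flag` records this.
  let flag : Q.V → Prop := fun v => ∃ a c, Q.t a = v ∧ Q.s c = v ∧ ¬ D.rel [a, c] ∧ (pi v a ↔ po v c)
  have key : ∀ v a c, Q.t a = v → Q.s c = v → ¬ D.rel [a, c] → (flag v ↔ (pi v a ↔ po v c)) := by
    intro v a c ha hc hr
    refine ⟨?_, fun h => ⟨a, c, ha, hc, hr, h⟩⟩
    rintro ⟨a', c', ha', hc', hr', h⟩
    by_cases haa : a = a'
    · subst haa
      by_cases hcc : c = c'
      · subst hcc; exact h
      · rcases hR a c c' (ha.trans hc.symm) (ha.trans hc'.symm) hcc with h1 | h1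
        · exact absurd h1 hr
        · exact absurd h1 hr'
    · by_cases hcc : c = c'
      · subst hcc
        rcases hL a a' c (ha.trans hc.symm) (ha'.trans hc.symm) haa with h1 | h1
        · exact absurd h1 hr
        · exact absurd h1 hr'
      · have h1 := hpi v a a' ha ha' haa
        have h2 := hpo v c c' hc hc' hcc
        tauto
  refine ⟨fun c => (po (Q.s c) c ↔ ¬ flag (Q.s c)), fun a => pi (Q.t a) a, ?_, ?_, ?_⟩
  · intro a a' h hn
    have := hpo (Q.s a') a a' h rfl hn
    clear_value flag
    simp only [h]
    grind
  · intro a a' h hn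
    have := hpi (Q.t a') a a' h rfl hn
    clear_value flag
    simp only [h]
    grind
  · intro a c h hr
    have := key (Q.s c) a c h rfl hr
    clear_value flag
    simp only [h]
    grind

/-! ### The band module as a block representation -/

theorem bLett_fin {Q : FinQuiver} (b : List (Letter Q)) (hb : b ≠ []) (j : Fin b.length) :
    bLett b hb j = b.get j := by
  unfold bLett
  rw [Nat.mod_eq_of_lt j.2, List.getD_eq_getElem _ _ j.2]
  rfl

theorem bVtx_fin {Q : FinQuiver} (b : List (Letter Q)) (hb : b ≠ []) (j : Fin b.length) :
    bVtx b hb j = lsrc (b.get j) := by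
  rw [← bLett_fin b hb j]
  rfl

theorem bandQuiver_inl {Q : FinQuiver} {b : List (Letter Q)} {c : Fin b.length} {a : Q.A}
    (h : b.get c = Sum.inl a) :
    (bandQuiver Q b).s c = c ∧ (bandQuiver Q b).t c = cycSucc c ∧ und (b.get c) = a := by
  refine ⟨?_, ?_, ?_⟩
  · simp only [bandQuiver, h]
  · simp only [bandQuiver, h]
  · rw [h]; rfl

theorem bandQuiver_inr {Q : FinQuiver} {b : List (Letter Q)} {c : Fin b.length} {a : Q.A}
    (h : b.get c = Sum.inr a) :
    (bandQuiver Q b).s c = cycSucc c ∧ (bandQuiver Q b).t c = c ∧ und (b.get c) = a := by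
  refine ⟨?_, ?_, ?_⟩
  · simp only [bandQuiver, h]
  · simp only [bandQuiver, h]
  · rw [h]; rfl

theorem bVtx_src {Q : FinQuiver} {D : BoundQuiver Q} {b : List (Letter Q)} (hb : b ≠ [])
    (hc : CyclicString D b) (c : Fin b.length) :
    bVtx b hb ((bandQuiver Q b).s c : Fin b.length) = Q.s (und (b.get c)) := by
  rcases h : b.get c with a | a
  · rw [(bandQuiver_inl h).1, bVtx_fin, h]; rfl
  · rw [(bandQuiver_inr h).1, bVtx_fin, ← hc.comp, h]; rfl

theorem bVtx_tgt {Q : FinQuiver} {D : BoundQuiver Q} {b : List (Letter Q)} (hb : b ≠ [])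
    (hc : CyclicString D b) (c : Fin b.length) :
    bVtx b hb ((bandQuiver Q b).t c : Fin b.length) = Q.t (und (b.get c)) := by
  rcases h : b.get c with a | a
  · rw [(bandQuiver_inl h).2.1, bVtx_fin, ← hc.comp, h]; rfl
  · rw [(bandQuiver_inr h).2.1, bVtx_fin, h]; rfl

theorem band_src_inj {Q : FinQuiver} {D : BoundQuiver Q} {b : List (Letter Q)}
    (hc : CyclicString D b) (c c' : Fin b.length) (hu : und (b.get c) = und (b.get c'))
    (h : (bandQuiver Q b).s c = (bandQuiver Q b).s c') : c = c' := by
  rcases h1 : b.get c with a | a <;> rcases h2 : b.get c' with a' | a'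
  · rwa [(bandQuiver_inl h1).1, (bandQuiver_inl h2).1] at h
  · rw [(bandQuiver_inl h1).1, (bandQuiver_inr h2).1] at h
    rw [(bandQuiver_inl h1).2.2, (bandQuiver_inr h2).2.2] at hu
    have := hc.red c'
    rw [← h, h1, h2, hu] at this
    exact absurd rfl this
  · rw [(bandQuiver_inr h1).1, (bandQuiver_inl h2).1] at h
    rw [(bandQuiver_inr h1).2.2, (bandQuiver_inl h2).2.2] at hu
    have := hc.red c
    rw [h, h1, h2, hu] at this
    exact absurd rfl this
  · rw [(bandQuiver_inr h1).1, (bandQuiver_inr h2).1] at h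
    exact cycSucc_injective h

theorem band_tgt_inj {Q : FinQuiver} {D : BoundQuiver Q} {b : List (Letter Q)}
    (hc : CyclicString D b) (c c' : Fin b.length) (hu : und (b.get c) = und (b.get c'))
    (h : (bandQuiver Q b).t c = (bandQuiver Q b).t c') : c = c' := by
  rcases h1 : b.get c with a | a <;> rcases h2 : b.get c' with a' | a'
  · rw [(bandQuiver_inl h1).2.1, (bandQuiver_inl h2).2.1] at h
    exact cycSucc_injective h
  · rw [(bandQuiver_inl h1).2.1, (bandQuiver_inr h2).2.1] at h
    rw [(bandQuiver_inl h1).2.2, (bandQuiver_inr h2).2.2] at hu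
    have := hc.red c
    rw [h, h1, h2, hu] at this
    exact absurd rfl this
  · rw [(bandQuiver_inr h1).2.1, (bandQuiver_inl h2).2.1] at h
    rw [(bandQuiver_inr h1).2.2, (bandQuiver_inl h2).2.2] at hu
    have := hc.red c'
    rw [← h, h1, h2, hu] at this
    exact absurd rfl this
  · rwa [(bandQuiver_inr h1).2.1, (bandQuiver_inr h2).2.1] at h

/-- The matrix by which the letter at position `c` of a word of length `n` acts. -/
noncomputable def letterMat {K : Type} [Field K] (n : ℕ) (lam : K) (r : ℕ) (c : ℕ) :
    Matrix (Fin r) (Fin r) K :=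
  fun κ μ => if c + 1 = n then jordEntry lam κ μ else if κ = μ then 1 else 0

theorem letterMat_injective {K : Type} [Field K] (n : ℕ) {lam : K} (hlam : lam ≠ 0) (r c : ℕ) :
    Function.Injective (Matrix.mulVecLin (letterMat n lam r c)) := by
  have hdet : (letterMat n lam r c).det ≠ 0 := by
    rw [Matrix.det_of_isLowerTriangular]
    · refine Finset.prod_ne_zero_iff.2 fun i _ => ?_
      simp only [letterMat, jordEntry, if_true]
      split_ifs
      · exact hlam
      · exact one_ne_zero
    · intro i j hij
      have hlt : i < j := hij
      have h1 : i ≠ j := hlt.ne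
      have h2 : ¬ ((j : ℕ) + 1 = i) := by
        have : (i : ℕ) < j := hlt
        omega
      simp [letterMat, jordEntry, h1, h2]
  exact Matrix.mulVec_injective_of_isUnit
    ((Matrix.isUnit_iff_isUnit_det _).2 (isUnit_iff_ne_zero.2 hdet))

/-- The matrix entries of the band module as sums over the arrows of the cyclic quiver, which treats
direct and inverse letters alike. -/
theorem bandEntry_eq {Q : FinQuiver} {K : Type} [Field K] (b : List (Letter Q)) (hb : b ≠ [])
    (lam : K) {r : ℕ} (a : Q.A) (k j : Fin b.length) (κ μ : Fin r) :
    bandEntry K b hb lam a k j κ μ =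
      ∑ c : Fin b.length, if und (b.get c) = a ∧ (bandQuiver Q b).s c = j ∧
        (bandQuiver Q b).t c = k then letterMat b.length lam r c κ μ else 0 := by
  have hsum : ∀ c : Fin b.length, (if und (b.get c) = a ∧ (bandQuiver Q b).s c = j ∧
        (bandQuiver Q b).t c = k then letterMat b.length lam r c κ μ else 0) =
      (if c = j then (if b.get c = Sum.inl a ∧ cycSucc c = k then
        letterMat b.length lam r c κ μ else 0) else 0) +
      (if c = k then (if b.get c = Sum.inr a ∧ cycSucc c = j then
        letterMat b.length lam r c κ μ else 0) else 0) := by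
    intro c
    rcases h : b.get c with a' | a'
    · obtain ⟨h1, h2, h3⟩ := bandQuiver_inl h
      rw [h1, h2]
      simp only [und, Sum.inl.injEq, reduceCtorEq, false_and, if_false, ite_self, add_zero]
      by_cases e1 : a' = a <;> by_cases e2 : c = j <;> by_cases e3 : cycSucc c = k <;>
        simp [e1, e2, e3]
    · obtain ⟨h1, h2, h3⟩ := bandQuiver_inr h
      rw [h1, h2]
      simp only [und, Sum.inr.injEq, reduceCtorEq, false_and, if_false, ite_self, zero_add]
      by_cases e1 : a' = a <;> by_cases e2 : c = k <;> by_cases e3 : cycSucc c = j <;>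
        simp [e1, e2, e3]
  simp_rw [hsum]
  rw [Finset.sum_add_distrib, Finset.sum_ite_eq', Finset.sum_ite_eq', if_pos (Finset.mem_univ _),
    if_pos (Finset.mem_univ _)]
  unfold bandEntry
  rw [bLett_fin, bLett_fin, Nat.mod_eq_of_lt k.2, Nat.mod_eq_of_lt j.2]
  have hcs : ∀ p q : Fin b.length, ((p : ℕ) + 1) % b.length = q ↔ cycSucc p = q :=
    fun p q => ⟨fun h => Fin.ext h, fun h => congrArg Fin.val h⟩
  simp only [hcs]
  rfl

theorem bandRep_blockMap {K : Type} [Field K] {Q : FinQuiver} {D : BoundQuiver Q}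
    {b : List (Letter Q)} (hb : b ≠ []) (hc : CyclicString D b) {lam : K} (hlam : lam ≠ 0)
    (r : ℕ) (a : Q.A) :
    BlockMap (vt := fun j : Fin b.length => bVtx b hb j) (i := Q.s a) (k := Q.t a)
      ((bandRep K Q b hb lam r).φ a) (bandQuiver Q b).s (bandQuiver Q b).t
      (Finset.univ.filter (fun c : Fin b.length => und (b.get c) = a))
      (fun c => Matrix.mulVecLin (letterMat b.length lam r c)) where
  inj c := letterMat_injective _ hlam r c
  src_inj c h c' h' := band_src_inj hc c c'
    ((Finset.mem_filter.1 h).2.trans (Finset.mem_filter.1 h').2.symm)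
  vs c h := by rw [bVtx_src hb hc, (Finset.mem_filter.1 h).2]
  vt c h := by rw [bVtx_tgt hb hc, (Finset.mem_filter.1 h).2]
  act := by
    intro c h x κ
    have hca := (Finset.mem_filter.1 h).2
    have hvs : bVtx b hb ((bandQuiver Q b).s c : Fin b.length) = Q.s a := by
      rw [bVtx_src hb hc, hca]
    change ∑ q : {j : Fin b.length // bVtx b hb j = Q.s a} × Fin r,
      bandEntry K b hb lam a _ _ _ _ * x q = ∑ μ, letterMat b.length lam r c κ μ * x (_, μ)
    rw [Fintype.sum_prod_type, Finset.sum_eq_single ⟨(bandQuiver Q b).s c, hvs⟩]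
    · refine Finset.sum_congr rfl fun μ _ => ?_
      congr 1
      rw [bandEntry_eq, Finset.sum_eq_single c]
      · rw [if_pos ⟨hca, rfl, rfl⟩]
      · intro c' _ hne
        rw [if_neg]
        rintro ⟨h1, h2, -⟩
        exact hne (band_src_inj hc c' c (h1.trans hca.symm) h2)
      · simp
    · intro q _ hq
      refine Finset.sum_eq_zero fun μ _ => ?_
      rw [bandEntry_eq, Finset.sum_eq_zero, zero_mul]
      intro c' _
      rw [if_neg]
      rintro ⟨h1, h2, h3⟩
      have := band_tgt_inj hc c' c (h1.trans hca.symm) h3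
      subst this
      exact hq (Subtype.ext h2.symm)
    · simp
  zero := by
    intro x p κ hp
    change ∑ q : {j : Fin b.length // bVtx b hb j = Q.s a} × Fin r,
      bandEntry K b hb lam a _ _ _ _ * x q = 0
    refine Finset.sum_eq_zero fun q _ => ?_
    rw [bandEntry_eq, Finset.sum_eq_zero, zero_mul]
    intro c _
    rw [if_neg]
    rintro ⟨h1, -, h3⟩
    exact hp c (Finset.mem_filter.2 ⟨Finset.mem_univ _, h1⟩) h3

/-! ### Level sets of the flow are segments -/

/-- The sign attached to a colour. -/
noncomputable def colSign (P : Prop) : ℝ := if P then 1 else -1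

theorem colSign_congr {P R : Prop} (h : P ↔ R) : colSign P = colSign R := by
  rw [propext h]

theorem colSign_of_iff_not {P R : Prop} (h : P ↔ ¬ R) : colSign P = -colSign R := by
  unfold colSign
  by_cases hR : R <;> simp [h, hR]

theorem colSign_mul_self (P : Prop) (y : ℝ) : colSign P * (colSign P * y) = y := by
  unfold colSign
  split_ifs <;> ring

/-- The colour of the left-hand end of a letter, that is, of the end at its first vertex. -/
def colFst {Q : FinQuiver} (so si : Q.A → Prop) : Letter Q → Prop
  | Sum.inl a => so a
  | Sum.inr a => si a

/-- The colour of the end of a letter at its second vertex. -/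
def colSnd {Q : FinQuiver} (so si : Q.A → Prop) : Letter Q → Prop
  | Sum.inl a => si a
  | Sum.inr a => so a

/-- A 2-colouring of the arrow ends at each vertex, `so a` being the colour of the end of `a` at its
source and `si a` the one at its target, in which two ends that a string can join, two outgoing
ends, and two incoming ends differ. -/
structure IsColouring {Q : FinQuiver} (D : BoundQuiver Q) (so si : Q.A → Prop) : Prop where
  out : ∀ a a', Q.s a = Q.s a' → a ≠ a' → (so a ↔ ¬ so a')
  inn : ∀ a a', Q.t a = Q.t a' → a ≠ a' → (si a ↔ ¬ si a')
  pass : ∀ a c, Q.t a = Q.s c → ¬ D.rel [a, c] → (si a ↔ ¬ so c)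

/-- The two letters meeting at a position of the band have differently coloured ends there. -/
theorem col_pass {Q : FinQuiver} {D : BoundQuiver Q} {so si : Q.A → Prop}
    (hcol : IsColouring D so si) {b : List (Letter Q)} (hc : CyclicString D b)
    (j : Fin b.length) :
    colSnd so si (b.get j) ↔ ¬ colFst so si (b.get (cycSucc j)) := by
  have hcomp := hc.comp j
  have hred := hc.red j
  have hdir := hc.dir j
  have hinv := hc.inv j
  rcases h1 : b.get j with a | a <;> rcases h2 : b.get (cycSucc j) with c | c <;>
    rw [h1, h2] at hcomp hred
  · exact hcol.pass a c hcomp (hdir a c h1 h2)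
  · exact hcol.inn a c hcomp (fun h => hred (by rw [h]; rfl))
  · exact hcol.out a c hcomp (fun h => hred (by rw [h]; rfl))
  · have := hcol.pass c a hcomp.symm (hinv a c h1 h2)
    change so a ↔ ¬ si c
    tauto

/-- The function ordering the positions: up to the sign of the colour, the flow leaving through
the following letter, corrected by half the divergence so that the preceding letter gives the
same value. -/
noncomputable def posVal {Q : FinQuiver} (so si : Q.A → Prop) (b : List (Letter Q))
    (h x : Fin b.length → ℝ) (p : Fin b.length) : ℝ :=
  colSign (colFst so si (b.get p)) * (h p - x p / 2)

theorem posVal_succ {Q : FinQuiver} {D : BoundQuiver Q} {so si : Q.A → Prop}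
    (hcol : IsColouring D so si) {b : List (Letter Q)} (hc : CyclicString D b)
    {h x : Fin b.length → ℝ} (hx : ∀ j, x (cycSucc j) = h (cycSucc j) - h j)
    (j : Fin b.length) :
    posVal so si b h x (cycSucc j) =
      colSign (colSnd so si (b.get j)) * (-h j - x (cycSucc j) / 2) := by
  rw [colSign_of_iff_not (col_pass hcol hc j), posVal, hx j]
  ring

theorem isSegment_of_threshold {n : ℕ} {G : Fin n → ℝ} {J U : Finset (Fin n)} (hU : U ⊆ J)
    (P : Prop) (θ : ℝ) (h : ∀ q ∈ J, q ∈ U ↔ θ ≤ colSign P * G q) : IsSegment G J U := by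
  refine ⟨hU, ?_⟩
  unfold colSign at h
  by_cases hP : P
  · left
    intro p hp q hq hpq
    have := (h p (hU hp)).1 hp
    rw [if_pos hP] at this
    rw [h q hq, if_pos hP]
    linarith
  · right
    intro p hp q hq hpq
    have := (h p (hU hp)).1 hp
    rw [if_neg hP] at this
    rw [h q hq, if_neg hP]
    linarith

section Segments

variable {Q : FinQuiver} {D : BoundQuiver Q} {so si : Q.A → Prop}
  {b : List (Letter Q)} {h x : Fin b.length → ℝ}

theorem posVal_src (hcol : IsColouring D so si) (hc : CyclicString D b)
    (hx : ∀ j, x (cycSucc j) = h (cycSucc j) - h j)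
    (hl : ∀ j a, b.get j = Sum.inl a → 0 ≤ h j) (hr : ∀ j a, b.get j = Sum.inr a → h j ≤ 0)
    (c : Fin b.length) :
    colSign (so (und (b.get c))) * posVal so si b h x ((bandQuiver Q b).s c) =
      |h c| - x ((bandQuiver Q b).s c) / 2 := by
  rcases e : b.get c with a | a
  · rw [(bandQuiver_inl e).1, posVal, e]
    exact (colSign_mul_self _ _).trans (by rw [abs_of_nonneg (hl c a e)])
  · rw [(bandQuiver_inr e).1, posVal_succ hcol hc hx, e]
    exact (colSign_mul_self _ _).trans (by rw [abs_of_nonpos (hr c a e)])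

theorem posVal_tgt (hcol : IsColouring D so si) (hc : CyclicString D b)
    (hx : ∀ j, x (cycSucc j) = h (cycSucc j) - h j)
    (hl : ∀ j a, b.get j = Sum.inl a → 0 ≤ h j) (hr : ∀ j a, b.get j = Sum.inr a → h j ≤ 0)
    (c : Fin b.length) :
    colSign (si (und (b.get c))) * posVal so si b h x ((bandQuiver Q b).t c) =
      -|h c| - x ((bandQuiver Q b).t c) / 2 := by
  rcases e : b.get c with a | a
  · rw [(bandQuiver_inl e).2.1, posVal_succ hcol hc hx, e]
    exact (colSign_mul_self _ _).trans (by rw [abs_of_nonneg (hl c a e)])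
  · rw [(bandQuiver_inr e).2.1, posVal, e]
    exact (colSign_mul_self _ _).trans (by rw [abs_of_nonpos (hr c a e)]; ring)

/-- At each position, every colour is the colour of one of the two letter ends there, so the value
of `posVal` can be read off from the letter with that colour. -/
theorem posVal_cases (hcol : IsColouring D so si) (hc : CyclicString D b)
    (hx : ∀ j, x (cycSucc j) = h (cycSucc j) - h j) (P : Prop) (q : Fin b.length) :
    ((colFst so si (b.get q) ↔ P) ∧ colSign P * posVal so si b h x q = h q - x q / 2) ∨
    ∃ j, cycSucc j = q ∧ (colSnd so si (b.get j) ↔ P) ∧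
      colSign P * posVal so si b h x q = -h j - x q / 2 := by
  by_cases hq : colFst so si (b.get q) ↔ P
  · left
    refine ⟨hq, ?_⟩
    rw [posVal, colSign_congr hq, colSign_mul_self]
  · right
    obtain ⟨j, rfl⟩ := cycSucc_bijective.2 q
    have hj : colSnd so si (b.get j) ↔ P := by
      have := col_pass hcol hc j
      tauto
    refine ⟨j, rfl, hj, ?_⟩
    rw [posVal_succ hcol hc hx, colSign_congr hj, colSign_mul_self]

theorem isSegment_src (hb : b ≠ []) (hcol : IsColouring D so si) (hc : CyclicString D b)
    (hx : ∀ j, x (cycSucc j) = h (cycSucc j) - h j)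
    (hl : ∀ j a, b.get j = Sum.inl a → 0 ≤ h j) (hr : ∀ j a, b.get j = Sum.inr a → h j ≤ 0)
    {v : Q.V → ℝ} (hv : ∀ j : Fin b.length, v (bVtx b hb j) = x j) (a : Q.A) {τ : ℝ}
    (hτ : 0 < τ) :
    IsSegment (posVal so si b h x) (posOver (fun j : Fin b.length => bVtx b hb j) (Q.s a))
      (((Finset.univ.filter (fun c : Fin b.length => und (b.get c) = a)).filter
        (fun c => τ ≤ |h c|)).image (bandQuiver Q b).s) := by
  refine isSegment_of_threshold ?_ (so a) (τ - v (Q.s a) / 2) ?_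
  · intro q hq
    simp only [Finset.mem_image, Finset.mem_filter, Finset.mem_univ, true_and] at hq
    obtain ⟨c, ⟨hca, -⟩, rfl⟩ := hq
    simp only [posOver, Finset.mem_filter, Finset.mem_univ, true_and]
    rw [bVtx_src hb hc, hca]
  · intro q hq
    have hqa : bVtx b hb q = Q.s a := (Finset.mem_filter.1 hq).2
    have hxq : x q = v (Q.s a) := by rw [← hv, hqa]
    simp only [Finset.mem_image, Finset.mem_filter, Finset.mem_univ, true_and]
    constructor
    · rintro ⟨c, ⟨hca, hτc⟩, rfl⟩
      rw [← hca, posVal_src hcol hc hx hl hr c, hca, ← hxq]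
      linarith
    · intro hθ
      rcases posVal_cases (h := h) hcol hc hx (so a) q with ⟨h1, h2⟩ | ⟨j, rfl, h1, h2⟩
      · rw [h2, hxq] at hθ
        have hpos : τ ≤ h q := by linarith
        rcases e : b.get q with a' | a'
        · rw [e] at h1
          have haa : a' = a := by
            by_contra hne
            rw [bVtx_fin, e] at hqa
            have := hcol.out a' a hqa hne
            change so a' ↔ so a at h1
            tauto
          exact ⟨q, ⟨by rw [e, ← haa]; rfl, hpos.trans (le_abs_self _)⟩, (bandQuiver_inl e).1⟩
        · exact absurd (hr q a' e) (by linarith)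
      · rw [h2, hxq] at hθ
        have hpos : τ ≤ -h j := by linarith
        rcases e : b.get j with a' | a'
        · exact absurd (hl j a' e) (by linarith)
        · rw [e] at h1
          have haa : a' = a := by
            by_contra hne
            rw [bVtx_fin, ← hc.comp, e] at hqa
            have := hcol.out a' a hqa hne
            change so a' ↔ so a at h1
            tauto
          exact ⟨j, ⟨by rw [e, ← haa]; rfl, hpos.trans (neg_le_abs _)⟩, (bandQuiver_inr e).1⟩

theorem isSegment_tgt (hb : b ≠ []) (hcol : IsColouring D so si) (hc : CyclicString D b)
    (hx : ∀ j, x (cycSucc j) = h (cycSucc j) - h j)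
    (hl : ∀ j a, b.get j = Sum.inl a → 0 ≤ h j) (hr : ∀ j a, b.get j = Sum.inr a → h j ≤ 0)
    {v : Q.V → ℝ} (hv : ∀ j : Fin b.length, v (bVtx b hb j) = x j) (a : Q.A) {τ : ℝ}
    (hτ : 0 < τ) :
    IsSegment (posVal so si b h x) (posOver (fun j : Fin b.length => bVtx b hb j) (Q.t a))
      (((Finset.univ.filter (fun c : Fin b.length => und (b.get c) = a)).filter
        (fun c => τ ≤ |h c|)).image (bandQuiver Q b).t) := by
  have hneg : ∀ y, colSign (¬ si a) * y = -(colSign (si a) * y) := fun y => by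
    rw [colSign_of_iff_not (R := si a) Iff.rfl]
    ring
  refine isSegment_of_threshold ?_ (¬ si a) (τ + v (Q.t a) / 2) ?_
  · intro q hq
    simp only [Finset.mem_image, Finset.mem_filter, Finset.mem_univ, true_and] at hq
    obtain ⟨c, ⟨hca, -⟩, rfl⟩ := hq
    simp only [posOver, Finset.mem_filter, Finset.mem_univ, true_and]
    rw [bVtx_tgt hb hc, hca]
  · intro q hq
    have hqa : bVtx b hb q = Q.t a := (Finset.mem_filter.1 hq).2
    have hxq : x q = v (Q.t a) := by rw [← hv, hqa]
    simp only [Finset.mem_image, Finset.mem_filter, Finset.mem_univ, true_and]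
    rw [hneg]
    constructor
    · rintro ⟨c, ⟨hca, hτc⟩, rfl⟩
      rw [← hca, posVal_tgt hcol hc hx hl hr c, hca, ← hxq]
      linarith
    · intro hθ
      rcases posVal_cases (h := h) hcol hc hx (si a) q with ⟨h1, h2⟩ | ⟨j, rfl, h1, h2⟩
      · rw [h2, hxq] at hθ
        have hpos : τ ≤ -h q := by linarith
        rcases e : b.get q with a' | a'
        · exact absurd (hl q a' e) (by linarith)
        · rw [e] at h1
          have haa : a' = a := by
            by_contra hne
            rw [bVtx_fin, e] at hqa
            have := hcol.inn a' a hqa hne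
            change si a' ↔ si a at h1
            tauto
          exact ⟨q, ⟨by rw [e, ← haa]; rfl, hpos.trans (neg_le_abs _)⟩, (bandQuiver_inr e).2.1⟩
      · rw [h2, hxq] at hθ
        have hpos : τ ≤ h j := by linarith
        rcases e : b.get j with a' | a'
        · rw [e] at h1
          have haa : a' = a := by
            by_contra hne
            rw [bVtx_fin, ← hc.comp, e] at hqa
            have := hcol.inn a' a hqa hne
            change si a' ↔ si a at h1
            tauto
          exact ⟨j, ⟨by rw [e, ← haa]; rfl, hpos.trans (le_abs_self _)⟩, (bandQuiver_inl e).2.1⟩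
        · exact absurd (hr j a' e) (by linarith)

/-- The vector `x` is the divergence of the flow `|h|` on the cyclic quiver. -/
theorem divergence_eq (hx : ∀ j, x (cycSucc j) = h (cycSucc j) - h j)
    (hl : ∀ j a, b.get j = Sum.inl a → 0 ≤ h j) (hr : ∀ j a, b.get j = Sum.inr a → h j ≤ 0)
    (m : Fin b.length → ℝ) :
    ∑ p, x p * m p =
      ∑ c, |h c| * (m ((bandQuiver Q b).s c) - m ((bandQuiver Q b).t c)) := by
  have hre : ∀ F : Fin b.length → ℝ, ∑ p, F p = ∑ j, F (cycSucc j) := fun F =>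
    (Function.Bijective.sum_comp cycSucc_bijective F).symm
  have h1 : ∀ c, |h c| * (m ((bandQuiver Q b).s c) - m ((bandQuiver Q b).t c)) =
      h c * m c - h c * m (cycSucc c) := by
    intro c
    rcases e : b.get c with a | a
    · rw [(bandQuiver_inl e).1, (bandQuiver_inl e).2.1, abs_of_nonneg (hl c a e)]
      ring
    · rw [(bandQuiver_inr e).1, (bandQuiver_inr e).2.1, abs_of_nonpos (hr c a e)]
      ring
  simp only [h1]
  rw [Finset.sum_sub_distrib, hre (fun p => h p * m p), hre (fun p => x p * m p),
    ← Finset.sum_sub_distrib]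
  exact Finset.sum_congr rfl fun j _ => by rw [hx]; ring

end Segments

/-! ### The stability space of the band module -/

theorem sum_blocks {n r : ℕ} {V : Type} [Fintype V] [DecidableEq V] (vt : Fin n → V) (v : V → ℝ)
    (S : Finset (Fin n)) :
    ∑ i, v i * (((S.filter (fun j => vt j = i)).card * r : ℕ) : ℝ) =
      r * ∑ j ∈ S, v (vt j) := by
  rw [← Finset.sum_fiberwise (s := S) (g := vt), Finset.mul_sum]
  refine Finset.sum_congr rfl fun i _ => ?_
  rw [Finset.sum_congr rfl (fun j hj => by rw [(Finset.mem_filter.1 hj).2] :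
    ∀ j ∈ S.filter (fun j => vt j = i), v (vt j) = v i)]
  rw [Finset.sum_const, nsmul_eq_mul]
  push_cast
  ring

theorem bandRep_stabInner {K : Type} [Field K] {Q : FinQuiver} (b : List (Letter Q)) (hb : b ≠ [])
    (lam : K) (r : ℕ) (v : Q.V → ℝ) :
    stabInner v (bandRep K Q b hb lam r).dimVec = r * ∑ j : Fin b.length, v (bVtx b hb j) := by
  rw [← sum_blocks (r := r) (fun j : Fin b.length => bVtx b hb j) v Finset.univ]
  unfold stabInner
  refine Finset.sum_congr rfl fun i _ => ?_
  congr 2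
  change Module.finrank K ({j : Fin b.length // bVtx b hb j = i} × Fin r → K) = _
  rw [Module.finrank_fintype_fun_eq_card, Fintype.card_prod, Fintype.card_fin,
    Fintype.card_subtype]

theorem thinRep_stabInner {K : Type} [Field K] (R : FinQuiver) (x : R.V → ℝ) :
    stabInner x (thinRep K R).dimVec = ∑ j, x j := by
  unfold stabInner
  refine Finset.sum_congr rfl fun j _ => ?_
  have : (thinRep K R).dimVec j = 1 := Module.finrank_self K
  rw [this, Nat.cast_one, mul_one]

/-- Positions closed under the arrows of the cyclic quiver span a subrepresentation of the band
module. -/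
theorem closed_sum_nonpos {K : Type} [Field K] {Q : FinQuiver} {D : BoundQuiver Q}
    {b : List (Letter Q)} (hb : b ≠ []) (hc : CyclicString D b) {lam : K} (hlam : lam ≠ 0)
    {r : ℕ} (hr : 1 ≤ r) {v : Q.V → ℝ} (hv : v ∈ stabSpace (bandRep K Q b hb lam r))
    (S : Finset (Fin b.length))
    (hS : ∀ c, (bandQuiver Q b).s c ∈ S → (bandQuiver Q b).t c ∈ S) :
    ∑ j ∈ S, v (bVtx b hb j) ≤ 0 := by
  let N : QSubRep (bandRep K Q b hb lam r) :=
    { L := fun i => suppOn K (fun j : Fin b.length => bVtx b hb j) r i S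
      compat := by
        intro a x hx
        have hB := bandRep_blockMap hb hc hlam r a
        rintro ⟨p, κ⟩ hp
        by_cases hE : ∀ c ∈ Finset.univ.filter (fun c : Fin b.length => und (b.get c) = a),
            (bandQuiver Q b).t c ≠ p.1
        · exact hB.zero x p κ hE
        · push Not at hE
          obtain ⟨c, hcE, hcp⟩ := hE
          have hp' : p = ⟨(bandQuiver Q b).t c, hB.vt c hcE⟩ := Subtype.ext hcp.symm
          subst hp'
          refine (hB.act c hcE x κ).trans ?_
          have : (fun μ => x (⟨(bandQuiver Q b).s c, hB.vs c hcE⟩, μ)) = 0 := by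
            funext μ
            exact hx _ fun hmem => hp (hS c hmem)
          rw [this, map_zero]
          rfl }
  have h := hv.2 N
  have h2 : stabInner v (fun i => Module.finrank K (N.L i)) =
      r * ∑ j ∈ S, v (bVtx b hb j) := by
    rw [← sum_blocks (r := r) (fun j : Fin b.length => bVtx b hb j) v S]
    unfold stabInner
    refine Finset.sum_congr rfl fun i _ => ?_
    congr 2
    change Module.finrank K (suppOn K (fun j : Fin b.length => bVtx b hb j) r i S) = _
    rw [finrank_suppOn]
    congr
  rw [h2] at h
  have hr' : (0 : ℝ) < r := by exact_mod_cast hr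
  exact nonpos_of_mul_nonpos_right h hr'

/-- A subrepresentation of the thin representation is determined by the closed set of positions
where it is nonzero, to which `closed_sum_nonpos` applies. -/
theorem thin_of_band {K : Type} [Field K] {Q : FinQuiver} {D : BoundQuiver Q}
    {b : List (Letter Q)} (hb : b ≠ []) (hc : CyclicString D b) {lam : K} (hlam : lam ≠ 0)
    {r : ℕ} (hr : 1 ≤ r) {v : Q.V → ℝ} (hv : v ∈ stabSpace (bandRep K Q b hb lam r)) :
    (fun j : Fin b.length => v (bVtx b hb j)) ∈ stabSpace (thinRep K (bandQuiver Q b)) := by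
  have hr' : (r : ℝ) ≠ 0 := by
    have : r ≠ 0 := by omega
    exact_mod_cast this
  constructor
  · rw [thinRep_stabInner]
    have h1 := hv.1
    rw [bandRep_stabInner] at h1
    exact (mul_eq_zero.1 h1).resolve_left hr'
  · intro N
    let S : Finset (Fin b.length) := Finset.univ.filter (fun j => (1 : K) ∈ N.L j)
    have hS := closed_sum_nonpos hb hc hlam hr hv S (by
      intro c hmem
      exact Finset.mem_filter.2
        ⟨Finset.mem_univ _, N.compat c (1 : K) (Finset.mem_filter.1 hmem).2⟩)
    refine le_trans (le_of_eq ?_) hS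
    rw [Finset.sum_filter]
    unfold stabInner
    refine Finset.sum_congr rfl fun j _ => ?_
    have hN : ∀ L : Submodule K K, Module.finrank K L = if (1 : K) ∈ L then 1 else 0 := by
      intro L
      rcases eq_bot_or_eq_top L with h | h
      · subst h
        rw [finrank_bot, if_neg]
        exact fun h1 => one_ne_zero ((Submodule.mem_bot K).1 h1)
      · subst h
        rw [finrank_top, Module.finrank_self, if_pos Submodule.mem_top]
    have hj : Module.finrank K (N.L j) = if (1 : K) ∈ N.L j then 1 else 0 := hN (N.L j)
    change v (bVtx b hb j) * ((Module.finrank K (N.L j) : ℕ) : ℝ) = _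
    rw [hj]
    split_ifs <;> simp

/-- The flow with divergence `x` and the order given by `posVal` satisfy the hypotheses of
`core_inequality`. -/
theorem band_of_thin {K : Type} [Field K] {Q : FinQuiver} {D : BoundQuiver Q}
    (hsb : SpecialBiserial D) {b : List (Letter Q)} (hb : b ≠ []) (hc : CyclicString D b)
    {lam : K} (hlam : lam ≠ 0) (r : ℕ) {x : Fin b.length → ℝ}
    (hx : x ∈ stabSpace (thinRep K (bandQuiver Q b))) {v : Q.V → ℝ}
    (hv : ∀ j : Fin b.length, v (bVtx b hb j) = x j) :
    v ∈ stabSpace (bandRep K Q b hb lam r) := by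
  constructor
  · rw [bandRep_stabInner]
    have h1 := hx.1
    rw [thinRep_stabInner] at h1
    simp only [hv]
    rw [show ∑ j : Fin b.length, x j = 0 from h1, mul_zero]
  · intro N
    obtain ⟨h, hdiv, hl, hr⟩ := exists_flow Q b hx
    obtain ⟨so, si, h1, h2, h3⟩ := exists_colouring hsb
    have hcol : IsColouring D so si := ⟨h1, h2, h3⟩
    exact core_inequality Q.s Q.t (fun j : Fin b.length => bVtx b hb j)
      (bandQuiver Q b).s (bandQuiver Q b).t (fun c => und (b.get c))
      (bVtx_src hb hc) (bVtx_tgt hb hc) (band_src_inj hc) (band_tgt_inj hc)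
      N.L (bandRep K Q b hb lam r).φ N.compat
      (fun c => Matrix.mulVecLin (letterMat b.length lam r c))
      (fun a => bandRep_blockMap hb hc hlam r a) v (fun c => |h c|) (fun c => abs_nonneg _)
      (fun m => by
        simp only [hv]
        exact divergence_eq hdiv hl hr m)
      (posVal so si b h x)
      (fun a _ hτ => isSegment_src hb hcol hc hdiv hl hr hv a hτ)
      (fun a _ hτ => isSegment_tgt hb hcol hc hdiv hl hr hv a hτ)

/-- For a band `b` over a special biserial algebra and `λ ∈ K^×`, `r ≥ 1`,
the image under `ι` of the stability space of the band module `M(b, λ, r)` is the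
intersection of the stability space of the thin representation `T(b)` with the subspace
identifying coordinates of repeated vertices. -/
theorem stability_space_of_band_module_from_thin
    (K : Type) [Field K] [IsAlgClosed K] (Q : FinQuiver) (D : BoundQuiver Q)
    (hsb : SpecialBiserial D) (b : List (Letter Q)) (hb : IsBand D b)
    (lam : K) (hlam : lam ≠ 0) (r : ℕ) (hr : 1 ≤ r) :
    (fun (v : Q.V → ℝ) (j : Fin b.length) => v (bVtx b hb.1 j)) ''
        stabSpace (bandRep K Q b hb.1 lam r) =
      stabSpace (thinRep K (bandQuiver Q b)) ∩
        {x : Fin b.length → ℝ |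
          ∀ j k : Fin b.length, bVtx b hb.1 j = bVtx b hb.1 k → x j = x k} := by
  have hc := cyclicString_of_isBand hb
  ext x
  constructor
  · rintro ⟨v, hv, rfl⟩
    exact ⟨thin_of_band hb.1 hc hlam hr hv, fun j k hjk => congrArg v hjk⟩
  · rintro ⟨hx, hR⟩
    -- Vertices not visited by `b` carry no dimension; they receive the value `0`.
    let v : Q.V → ℝ := fun i =>
      if hi : ∃ j : Fin b.length, bVtx b hb.1 j = i then x hi.choose else 0
    have hv : ∀ j : Fin b.length, v (bVtx b hb.1 j) = x j := by
      intro j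
      have hi : ∃ k : Fin b.length, bVtx b hb.1 k = bVtx b hb.1 j := ⟨j, rfl⟩
      simp only [v]
      rw [dif_pos hi]
      exact hR _ _ hi.choose_spec
    exact ⟨v, band_of_thin hsb hb.1 hc hlam r hx hv, funext hv⟩
end
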